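/- arXiv:2409.04277 — 3 statements merged into one kernel-verified Lean document; each statement's English description precedes it below -/
import Mathlib

section
/- Assume k := 2 f''(1) + 6 f'(1) ≠ 0. Let 0 < c₀ < c_s and let ξ : (c₀, c_s) → (0,1) satisfy, for every c ∈ (c₀, c_s): N_c(ξ(c)) = 0, N_c(x) < 0 for every x ∈ (0, ξ(c)), ∂_x N_c(ξ(c)) > 0, and ξ(c) → 0 as c → c_s⁻. Define P(c) := (c/2) ∫_0^{ξ(c)} x² / ((1−x) √(−N_c(x))) dx. Then P(c)/ν_c³ → 6 c_s / k² as c → c_s⁻. -/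
open Real MeasureTheory Filter Topology

lemma aux_mvt (R R' : ℝ → ℝ) (C δ : ℝ) (hδ : δ ≤ 1)
    (h : ∀ x ∈ Set.Icc (0:ℝ) 1, HasDerivAt R (R' x) x) (a b : ℝ) (ha : 0 ≤ a) (hab : a ≤ b)
    (hb : b < δ) (hC : ∀ x ∈ Set.Icc a b, |R' x| ≤ C) : |R b - R a| ≤ C * (b - a) := by
  have := Convex.norm_image_sub_le_of_norm_hasDerivWithin_le (f := R) (f' := R') (C := C)
    (s := Set.Icc a b) (x := a) (y := b)
    (fun x hx => (h x ⟨ha.trans hx.1, by linarith [hx.2]⟩).hasDerivWithinAt) hC (convex_Icc a b)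
    ⟨le_refl _, hab⟩ ⟨hab, le_refl _⟩
  rw [Real.norm_eq_abs, Real.norm_eq_abs, abs_of_nonneg (sub_nonneg.2 hab)] at this
  exact this

lemma aux_taylor (A A1 A2 : ℝ → ℝ) (s k : ℝ)
    (h0 : ∀ x ∈ Set.Icc (0:ℝ) 1, HasDerivAt A (A1 x) x)
    (h1 : ∀ x ∈ Set.Icc (0:ℝ) 1, HasDerivAt A1 (A2 x) x)
    (h2 : HasDerivAt A2 (2 * k) 0)
    (z0 : A 0 = 0) (z1 : A1 0 = 0) (z2 : A2 0 = 2 * s) (ε : ℝ) (hε : 0 < ε) :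
    ∃ δ, 0 < δ ∧ δ ≤ 1 ∧ ∀ x y, 0 < x → x ≤ y → y < δ →
      |A y / y ^ 2 - A x / x ^ 2 - k / 3 * (y - x)| ≤ ε * (y - x) ∧
      |A y / y ^ 2 - s - k / 3 * y| ≤ ε * y := by
  have hlo := h2.isLittleO
  have hb := hlo.def (c := ε / 3) (by positivity)
  obtain ⟨d, hd, hball⟩ := Metric.eventually_nhds_iff.1 hb
  set R0 : ℝ → ℝ := fun x => A x - s * x ^ 2 - k / 3 * x ^ 3 with hR0
  set R1 : ℝ → ℝ := fun x => A1 x - 2 * s * x - k * x ^ 2 with hR1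
  set R2 : ℝ → ℝ := fun x => A2 x - 2 * s - 2 * k * x with hR2
  have d0 : ∀ x ∈ Set.Icc (0:ℝ) 1, HasDerivAt R0 (R1 x) x := by
    intro x hx
    have := ((h0 x hx).sub (((hasDerivAt_id x).pow 2).const_mul s)).sub
      (((hasDerivAt_id x).pow 3).const_mul (k/3))
    refine (this.congr_deriv ?_)
    simp [hR1]; ring
  have d1 : ∀ x ∈ Set.Icc (0:ℝ) 1, HasDerivAt R1 (R2 x) x := by
    intro x hx
    have := ((h1 x hx).sub ((hasDerivAt_id x).const_mul (2*s))).sub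
      (((hasDerivAt_id x).pow 2).const_mul k)
    refine (this.congr_deriv ?_)
    simp [hR2]; ring
  have b2 : ∀ x, 0 ≤ x → x < min d 1 → |R2 x| ≤ ε / 3 * x := by
    intro x hx hxd
    have := hball (y := x) (by rw [Real.dist_eq, sub_zero, abs_of_nonneg hx]; exact lt_of_lt_of_le hxd (min_le_left _ _))
    simp only [sub_zero, smul_eq_mul, z2, Real.norm_eq_abs, abs_of_nonneg hx] at this
    rw [hR2]; simp only
    rwa [show A2 x - 2 * s - 2 * k * x = A2 x - 2 * s - x * (2 * k) by ring]
  have b1 : ∀ x, 0 ≤ x → x < min d 1 → |R1 x| ≤ ε / 3 * x ^ 2 := by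
    intro x hx hxd
    have := aux_mvt R1 R2 (ε / 3 * x) (min d 1) (min_le_right _ _) d1 0 x le_rfl hx hxd
      (fun y hy => (b2 y hy.1 (hy.2.trans_lt hxd)).trans (by have := hy.2; gcongr))
    have e : R1 0 = 0 := by simp [hR1, z1]
    rw [e] at this
    simp only [sub_zero] at this
    linarith
  have b0 : ∀ x, 0 ≤ x → x < min d 1 → |R0 x| ≤ ε / 3 * x ^ 3 := by
    intro x hx hxd
    have := aux_mvt R0 R1 (ε / 3 * x ^ 2) (min d 1) (min_le_right _ _) d0 0 x le_rfl hx hxd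
      (fun y hy => (b1 y hy.1 (hy.2.trans_lt hxd)).trans (by have := hy.2; have := hy.1; gcongr))
    have e : R0 0 = 0 := by simp [hR0, z0]
    rw [e] at this
    simp only [sub_zero] at this
    linarith
  refine ⟨min d 1, by positivity, min_le_right _ _, ?_⟩
  intro x y hx hxy hy
  have hy0 : 0 < y := hx.trans_le hxy
  have key : ∀ t, t ≠ 0 → R0 t / t ^ 2 = A t / t ^ 2 - s - k / 3 * t := by
    intro t ht; simp only [hR0]; field_simp
  constructor
  · have hdq : ∀ t ∈ Set.Icc x y, HasDerivWithinAt (fun t => R0 t / t ^ 2)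
        ((R1 t * t ^ 2 - R0 t * (2 * t)) / (t ^ 2) ^ 2) (Set.Icc x y) t := by
      intro t ht
      have ht0 : 0 < t := hx.trans_le ht.1
      have ht1 : t ≤ 1 := by linarith [ht.2, min_le_right d 1]
      have := (d0 t ⟨ht0.le, ht1⟩).div ((hasDerivAt_id t).pow 2) (by simp; positivity)
      refine (this.congr_deriv ?_).hasDerivWithinAt
      simp
    have hbd : ∀ t ∈ Set.Icc x y, ‖(R1 t * t ^ 2 - R0 t * (2 * t)) / (t ^ 2) ^ 2‖ ≤ ε := by
      intro t ht
      have ht0 : 0 < t := hx.trans_le ht.1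
      have e1 := b1 t ht0.le (ht.2.trans_lt hy)
      have e0 := b0 t ht0.le (ht.2.trans_lt hy)
      rw [norm_div, Real.norm_eq_abs, Real.norm_eq_abs, abs_of_nonneg (by positivity : 0 ≤ (t^2)^2),
        div_le_iff₀ (by positivity)]
      calc |R1 t * t ^ 2 - R0 t * (2 * t)| ≤ |R1 t * t ^ 2| + |R0 t * (2 * t)| := abs_sub _ _
        _ = |R1 t| * t ^ 2 + |R0 t| * (2 * t) := by
          rw [abs_mul, abs_mul, abs_of_nonneg (by positivity : 0 ≤ t^2), abs_of_nonneg (by positivity : 0 ≤ 2 * t)]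
        _ ≤ ε / 3 * t ^ 2 * t ^ 2 + ε / 3 * t ^ 3 * (2 * t) := by gcongr
        _ = ε * (t ^ 2) ^ 2 := by ring
    have := Convex.norm_image_sub_le_of_norm_hasDerivWithin_le hdq hbd (convex_Icc x y)
      ⟨le_refl _, hxy⟩ ⟨hxy, le_refl _⟩
    rw [Real.norm_eq_abs, Real.norm_eq_abs, abs_of_nonneg (sub_nonneg.2 hxy), key x hx.ne', key y hy0.ne'] at this
    convert this using 2
    ring
  · rw [← key y hy0.ne', abs_div, abs_of_nonneg (by positivity : 0 ≤ y ^ 2), div_le_iff₀ (by positivity)]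
    have := b0 y hy0.le hy
    have e : 0 ≤ ε * y ^ 3 := by positivity
    nlinarith

lemma aux_int (κ : ℝ) (hκ : 0 < κ) :
    ∫ t in (0:ℝ)..1, t / √(κ * (1 - t)) = 4 / 3 / √κ := by
  have h1 : ∫ t in (0:ℝ)..1, t / √(κ * (1 - t)) = ∫ t in (0:ℝ)..1, (1 - t) / √(κ * t) := by
    have := intervalIntegral.integral_comp_sub_left (a := 0) (b := 1) (fun t : ℝ => (1 - t) / √(κ * t)) 1
    simp only [sub_sub_cancel, sub_self, sub_zero] at this
    exact this
  rw [h1]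
  have h2 : ∫ t in (0:ℝ)..1, (1 - t) / √(κ * t)
      = ∫ t in (0:ℝ)..1, (1 / √κ) * (t ^ (-(1/2) : ℝ) - t ^ (1/2 : ℝ)) := by
    apply intervalIntegral.integral_congr_ae
    refine Eventually.of_forall fun t ht => ?_
    rw [Set.uIoc_of_le zero_le_one] at ht
    have ht0 := ht.1
    rw [Real.rpow_neg ht0.le, ← Real.sqrt_eq_rpow, Real.sqrt_mul hκ.le]
    have : 0 < √t := Real.sqrt_pos.2 ht0
    have : 0 < √κ := Real.sqrt_pos.2 hκ
    field_simp
    rw [Real.sq_sqrt ht0.le]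
  rw [h2, intervalIntegral.integral_const_mul, intervalIntegral.integral_sub,
    integral_rpow (by norm_num), integral_rpow (by norm_num)]
  · norm_num; ring
  · exact intervalIntegral.intervalIntegrable_rpow' (by norm_num)
  · exact intervalIntegral.intervalIntegrable_rpow' (by norm_num)

lemma aux_intble (κ : ℝ) (hκ : 0 < κ) :
    IntervalIntegrable (fun t : ℝ => 2 / √(κ * (1 - t))) volume 0 1 := by
  have h : IntervalIntegrable (fun t : ℝ => t ^ (-(1/2) : ℝ)) volume 0 1 :=
    intervalIntegral.intervalIntegrable_rpow' (by norm_num)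
  have h2 := ((h.comp_sub_left 1).const_mul (2 / √κ)).symm
  simp only [sub_zero, sub_self] at h2
  refine h2.congr ?_
  intro t ht
  rw [Set.uIoc_of_le zero_le_one] at ht
  have : 0 ≤ 1 - t := by linarith [ht.2]
  simp only
  rw [Real.rpow_neg this, ← Real.sqrt_eq_rpow, Real.sqrt_mul hκ.le]
  rw [div_mul_eq_mul_div, ← div_eq_mul_inv, div_div, mul_comm]

lemma aux_main (A : ℝ → ℝ) (cs k : ℝ) (hcs : 0 < cs) (hk0 : k ≠ 0)
    (hA : ContinuousOn A (Set.Icc 0 1))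
    (hT : ∀ ε, 0 < ε → ∃ δ, 0 < δ ∧ δ ≤ 1 ∧ ∀ x y, 0 < x → x ≤ y → y < δ →
      |A y / y ^ 2 - A x / x ^ 2 - k / 3 * (y - x)| ≤ ε * (y - x) ∧
      |A y / y ^ 2 - cs ^ 2 - k / 3 * y| ≤ ε * y)
    (c₀ : ℝ) (hc₀ : 0 < c₀) (hc₀cs : c₀ < cs)
    (ξ : ℝ → ℝ)
    (hξmem : ∀ c ∈ Set.Ioo c₀ cs, ξ c ∈ Set.Ioo (0:ℝ) 1)
    (hzero : ∀ c ∈ Set.Ioo c₀ cs, c ^ 2 * (ξ c) ^ 2 - A (ξ c) = 0)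
    (hξ0 : Tendsto ξ (𝓝[<] cs) (𝓝 0))
    (P : ℝ → ℝ)
    (hP : ∀ c, P c = (c / 2) * ∫ x in (0:ℝ)..(ξ c),
      x ^ 2 / ((1 - x) * Real.sqrt (-(c ^ 2 * x ^ 2 - A x)))) :
    Tendsto (fun c => P c / (Real.sqrt (cs ^ 2 - c ^ 2)) ^ 3) (𝓝[<] cs)
      (𝓝 (6 * cs / k ^ 2)) := by
  have hI : ∀ᶠ c in 𝓝[<] cs, c ∈ Set.Ioo c₀ cs := Ioo_mem_nhdsLT hc₀cs
  have hlt : ∀ δ : ℝ, 0 < δ → ∀ᶠ c in 𝓝[<] cs, ξ c < δ := fun δ hδ => hξ0.eventually_lt_const hδ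
  have hAξ : ∀ c ∈ Set.Ioo c₀ cs, A (ξ c) / ξ c ^ 2 = c ^ 2 := by
    intro c hc
    have h1 := (hξmem c hc).1
    rw [div_eq_iff (by positivity)]
    linarith [hzero c hc]
  have hT1 : Tendsto (fun c => (cs ^ 2 - c ^ 2) / ξ c) (𝓝[<] cs) (𝓝 (-k / 3)) := by
    rw [Metric.tendsto_nhds]
    intro ε hε
    obtain ⟨δ, hδ, -, hT'⟩ := hT (ε / 2) (by positivity)
    filter_upwards [hI, hlt δ hδ] with c hc hcδ
    have h1 := (hξmem c hc).1
    have := (hT' (ξ c) (ξ c) h1 le_rfl hcδ).2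
    rw [hAξ c hc] at this
    rw [Real.dist_eq]
    have e : (cs ^ 2 - c ^ 2) / ξ c - -k / 3 = - (c ^ 2 - cs ^ 2 - k / 3 * ξ c) / ξ c := by
      field_simp; ring
    rw [e, abs_div, abs_neg, abs_of_pos h1, div_lt_iff₀ h1]
    refine this.trans_lt ?_
    have : 0 < ε * ξ c := by positivity
    linarith
  have hκ0 : 0 ≤ -k / 3 := by
    refine ge_of_tendsto hT1 ?_
    filter_upwards [hI] with c hc
    have h1 := (hξmem c hc).1
    have h2 := hc.1
    have h3 := hc.2
    refine div_nonneg ?_ h1.le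
    nlinarith
  obtain ⟨κ, hκe⟩ : ∃ κ, κ = -k / 3 := ⟨_, rfl⟩
  rw [← hκe] at hT1 hκ0
  have hκ : 0 < κ := lt_of_le_of_ne hκ0 (by rw [hκe]; intro h; apply hk0; linarith)
  have hke : k / 3 = -κ := by rw [hκe]; ring
  rw [hke] at hT
  -- the rescaled quotient
  have hD : ∀ ε, 0 < ε → ∀ᶠ c in 𝓝[<] cs, ∀ t ∈ Set.Ioo (0:ℝ) 1, ∃ q : ℝ,
      |q - κ * (1 - t)| ≤ ε * (1 - t) ∧ -(c ^ 2 * (ξ c * t) ^ 2 - A (ξ c * t)) = (ξ c * t) ^ 2 * (ξ c * q) := by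
    intro ε hε
    obtain ⟨δ, hδ, -, hT'⟩ := hT ε hε
    filter_upwards [hI, hlt δ hδ] with c hc hcδ t ht
    have h1 := (hξmem c hc).1
    have ht0 := ht.1
    have hx : 0 < ξ c * t := by positivity
    have := (hT' (ξ c * t) (ξ c) hx (by nlinarith [ht.2]) hcδ).1
    rw [hAξ c hc] at this
    refine ⟨(A (ξ c * t) / (ξ c * t) ^ 2 - c ^ 2) / ξ c, ?_, ?_⟩
    · have e : (A (ξ c * t) / (ξ c * t) ^ 2 - c ^ 2) / ξ c - κ * (1 - t)
        = -(c ^ 2 - A (ξ c * t) / (ξ c * t) ^ 2 - -κ * (ξ c - ξ c * t)) / ξ c := by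
        rw [eq_div_iff h1.ne', sub_mul, div_mul_cancel₀ _ h1.ne']; ring
      rw [e, abs_div, abs_neg, abs_of_pos h1, div_le_iff₀ h1]
      linarith
    · rw [mul_div_cancel₀ _ h1.ne', mul_sub, mul_div_cancel₀ _ (by positivity)]
      ring
  set φ : ℝ → ℝ → ℝ := fun c x => x ^ 2 / ((1 - x) * √(-(c ^ 2 * x ^ 2 - A x))) with hφ
  have hform : ∀ c ∈ Set.Ioo c₀ cs, ∀ t ∈ Set.Ioo (0:ℝ) 1, ∀ q,
      -(c ^ 2 * (ξ c * t) ^ 2 - A (ξ c * t)) = (ξ c * t) ^ 2 * (ξ c * q) → 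
      φ c (ξ c * t) / √(ξ c) = t / ((1 - ξ c * t) * √q) := by
    intro c hc t ht q hq
    have h1 := (hξmem c hc).1
    have ht0 := ht.1
    simp only [hφ]
    rw [hq, Real.sqrt_mul (by positivity), Real.sqrt_sq (by positivity), Real.sqrt_mul h1.le]
    have hs : 0 < √(ξ c) := Real.sqrt_pos.2 h1
    have h2 : ξ c = √(ξ c) * √(ξ c) := (Real.mul_self_sqrt h1.le).symm
    have h3 : (ξ c * t) ^ 2 / ((1 - ξ c * t) * (ξ c * t * (√(ξ c) * √q))) / √(ξ c)
       = (ξ c * (ξ c * t)) * t / ((ξ c * (ξ c * t)) * ((1 - ξ c * t) * √q)) := by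
      rw [div_div]
      congr 1
      · ring
      · linear_combination (-((1 - ξ c * t) * (ξ c * t) * √q)) * h2
    rw [h3, mul_div_mul_left _ _ (by positivity)]
  have hne : ∀ᵐ t : ℝ, t ≠ 1 := by simp [ae_iff]
  have hJ : Tendsto (fun c => ∫ t in (0:ℝ)..1, φ c (ξ c * t) / √(ξ c)) (𝓝[<] cs)
      (𝓝 (∫ t in (0:ℝ)..1, t / √(κ * (1 - t)))) := by
    refine intervalIntegral.tendsto_integral_filter_of_dominated_convergence
      (fun t => 2 / √(κ / 2 * (1 - t))) ?_ ?_ (aux_intble _ (by positivity)) ?_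
    · filter_upwards [hI] with c hc
      have h1 := (hξmem c hc)
      have hAc : ContinuousOn (fun t => A (ξ c * t)) (Set.uIoc 0 1) := by
        rw [Set.uIoc_of_le zero_le_one]
        refine hA.comp (by fun_prop) ?_
        intro t ht
        have := ht.1
        have := ht.2
        exact ⟨by nlinarith [h1.1], by nlinarith [h1.1, h1.2]⟩
      have hm : AEMeasurable (fun t => A (ξ c * t)) (volume.restrict (Set.uIoc 0 1)) :=
        hAc.aemeasurable measurableSet_uIoc
      simp only [hφ]
      have hpoly : Measurable (fun t : ℝ => c ^ 2 * (ξ c * t) ^ 2) := by fun_prop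
      have hp2 : Measurable (fun t : ℝ => (ξ c * t) ^ 2) := by fun_prop
      have hp1 : Measurable (fun t : ℝ => 1 - ξ c * t) := by fun_prop
      exact ((hp2.aemeasurable.div (hp1.aemeasurable.mul
        (hpoly.aemeasurable.sub hm).neg.sqrt)).div_const _).aestronglyMeasurable
    · filter_upwards [hI, hlt (1/2) (by norm_num), hD (κ / 2) (by positivity)] with c hc hc2 hcD
      filter_upwards [hne] with t ht1 ht
      rw [Set.uIoc_of_le zero_le_one] at ht
      have ht' : t ∈ Set.Ioo (0:ℝ) 1 := ⟨ht.1, lt_of_le_of_ne ht.2 ht1⟩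
      obtain ⟨q, hq1, hq2⟩ := hcD t ht'
      rw [hform c hc t ht' q hq2]
      have h1 := (hξmem c hc).1
      have hqlow : κ / 2 * (1 - t) ≤ q := by
        have := (abs_le.1 hq1).1
        linarith
      have ht0 := ht'.1
      have hd : 1 / 2 ≤ 1 - ξ c * t := by nlinarith [ht'.2]
      have hpos : 0 < κ / 2 * (1 - t) := mul_pos (by positivity) (by linarith [ht'.2])
      have hsp : 0 < √(κ / 2 * (1 - t)) := Real.sqrt_pos.2 hpos
      rw [Real.norm_of_nonneg (by positivity)]
      calc t / ((1 - ξ c * t) * √q) ≤ 1 / (1 / 2 * √(κ / 2 * (1 - t))) := by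
            gcongr
            exact ht'.2.le
        _ = 2 / √(κ / 2 * (1 - t)) := by field_simp
    · filter_upwards [hne] with t ht1 ht
      rw [Set.uIoc_of_le zero_le_one] at ht
      have ht' : t ∈ Set.Ioo (0:ℝ) 1 := ⟨ht.1, lt_of_le_of_ne ht.2 ht1⟩
      have hDD := fun ε hε => (hD ε hε).mono (fun c hc => hc t ht')
      have ht2 : 0 < 1 - t := by linarith [ht'.2]
      have ht0 := ht'.1
      have hQ : Tendsto (fun c => -(c ^ 2 * (ξ c * t) ^ 2 - A (ξ c * t)) / ((ξ c * t) ^ 2 * ξ c)) (𝓝[<] cs)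
          (𝓝 (κ * (1 - t))) := by
        rw [Metric.tendsto_nhds]
        intro ε hε
        filter_upwards [hI, hDD (ε / 2) (by positivity)] with c hc hcD
        obtain ⟨q, hq1, hq2⟩ := hcD
        have h1 := (hξmem c hc).1
        rw [hq2, ← mul_assoc, mul_div_cancel_left₀ _ (by positivity), Real.dist_eq]
        refine hq1.trans_lt ?_
        nlinarith
      have hlim : Tendsto (fun c => t / ((1 - ξ c * t) * √(-(c ^ 2 * (ξ c * t) ^ 2 - A (ξ c * t)) / ((ξ c * t) ^ 2 * ξ c))))
          (𝓝[<] cs) (𝓝 (t / ((1 - 0 * t) * √(κ * (1 - t))))) := by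
        refine Tendsto.div tendsto_const_nhds ?_ ?_
        · exact (tendsto_const_nhds.sub (hξ0.mul_const t)).mul hQ.sqrt
        · have : 0 < √(κ * (1 - t)) := Real.sqrt_pos.2 (by positivity)
          simp [this.ne']
      rw [zero_mul, sub_zero, one_mul] at hlim
      refine hlim.congr' ?_
      filter_upwards [hI] with c hc
      have h1 := (hξmem c hc).1
      symm
      apply hform c hc t ht'
      field_simp
  rw [aux_int κ hκ] at hJ
  have hcT : Tendsto (fun c : ℝ => c / 2) (𝓝[<] cs) (𝓝 (cs / 2)) :=
    (tendsto_id.mono_left nhdsWithin_le_nhds).div_const 2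
  have hsκ : 0 < √κ := Real.sqrt_pos.2 hκ
  have hfin := (hcT.mul hJ).div (hT1.sqrt.pow 3) (by positivity)
  have hval : cs / 2 * (4 / 3 / √κ) / √κ ^ 3 = 6 * cs / k ^ 2 := by
    have h4 : √κ ^ 4 = κ ^ 2 := by
      rw [show √κ ^ 4 = (√κ ^ 2) ^ 2 by ring, Real.sq_sqrt hκ.le]
    have hk' : k = -3 * κ := by rw [hκe]; ring
    have : cs / 2 * (4 / 3 / √κ) / √κ ^ 3 = cs / 2 * (4 / 3) / √κ ^ 4 := by field_simp
    rw [this, h4, hk']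
    field_simp
    norm_num
  rw [hval] at hfin
  refine hfin.congr' ?_
  filter_upwards [hI] with c hc
  have h1 := (hξmem c hc).1
  have hs : 0 < √(ξ c) := Real.sqrt_pos.2 h1
  have hsub : ∫ x in (0:ℝ)..(ξ c), φ c x = ξ c * ∫ t in (0:ℝ)..1, φ c (ξ c * t) := by
    have := intervalIntegral.mul_integral_comp_mul_left (a := 0) (b := 1) (f := φ c) (c := ξ c)
    simpa using this.symm
  have hPc : P c = c / 2 * ∫ x in (0:ℝ)..(ξ c), φ c x := hP c
  have hν : 0 < √(cs ^ 2 - c ^ 2) := Real.sqrt_pos.2 (by nlinarith [hc.1, hc.2])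
  simp only [Pi.mul_apply, Pi.div_apply]
  rw [hPc, hsub, intervalIntegral.integral_div, Real.sqrt_div' _ h1.le]
  have h2 : ξ c = √(ξ c) ^ 2 := (Real.sq_sqrt h1.le).symm
  generalize (∫ t in (0:ℝ)..1, φ c (ξ c * t)) = J
  field_simp
  rw [← h2]

theorem stmt_11 (f : ℝ → ℝ) (U : Set ℝ) (hU : IsOpen U) (hUIcc : Set.Icc (0:ℝ) 1 ⊆ U)
    (hf : ContDiffOn ℝ 3 f U) (hf1 : f 1 = 0) (hf'1 : deriv f 1 < 0)
    (cs k : ℝ) (hcs : cs = Real.sqrt (-(2 * deriv f 1)))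
    (hk : k = 2 * deriv (deriv f) 1 + 6 * deriv f 1) (hk0 : k ≠ 0)
    (F : ℝ → ℝ) (hF : ∀ r, F r = ∫ ρ in r..1, f ρ)
    (c₀ : ℝ) (hc₀ : 0 < c₀) (hc₀cs : c₀ < cs)
    (ξ : ℝ → ℝ)
    (hξmem : ∀ c ∈ Set.Ioo c₀ cs, ξ c ∈ Set.Ioo (0:ℝ) 1)
    (hzero : ∀ c ∈ Set.Ioo c₀ cs,
      c ^ 2 * (ξ c) ^ 2 - 4 * (1 - ξ c) * F (1 - ξ c) = 0)
    (hneg : ∀ c ∈ Set.Ioo c₀ cs, ∀ x ∈ Set.Ioo 0 (ξ c),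
      c ^ 2 * x ^ 2 - 4 * (1 - x) * F (1 - x) < 0)
    (hdN : ∀ c ∈ Set.Ioo c₀ cs,
      0 < deriv (fun x => c ^ 2 * x ^ 2 - 4 * (1 - x) * F (1 - x)) (ξ c))
    (hξ0 : Tendsto ξ (𝓝[<] cs) (𝓝 0))
    (P : ℝ → ℝ)
    (hP : ∀ c, P c = (c / 2) * ∫ x in (0:ℝ)..(ξ c),
      x ^ 2 / ((1 - x) * Real.sqrt (-(c ^ 2 * x ^ 2 - 4 * (1 - x) * F (1 - x))))) :
    Tendsto (fun c => P c / (Real.sqrt (cs ^ 2 - c ^ 2)) ^ 3) (𝓝[<] cs)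
      (𝓝 (6 * cs / k ^ 2)) := by
  have hcs0 : 0 < cs := hc₀.trans hc₀cs
  have hcs2 : cs ^ 2 = -(2 * deriv f 1) := by rw [hcs, Real.sq_sqrt (by linarith)]
  have hFd : ∀ r ∈ Set.Icc (0:ℝ) 1, HasDerivAt F (-f r) r := by
    intro r hr
    have e : F = fun r => ∫ ρ in r..1, f ρ := funext hF
    rw [e]
    refine intervalIntegral.integral_hasDerivAt_left ?_ ?_ ?_
    · apply ContinuousOn.intervalIntegrable
      refine hf.continuousOn.mono ?_
      rw [Set.uIcc_of_le hr.2]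
      exact fun x hx => hUIcc ⟨hr.1.trans hx.1, hx.2⟩
    · exact hf.continuousOn.stronglyMeasurableAtFilter hU r (hUIcc hr)
    · exact hf.continuousOn.continuousAt (hU.mem_nhds (hUIcc hr))
  have hfd : ∀ r ∈ Set.Icc (0:ℝ) 1, HasDerivAt f (deriv f r) r := by
    intro r hr
    exact ((hf.differentiableOn (by norm_num)).differentiableAt (hU.mem_nhds (hUIcc hr))).hasDerivAt
  have h1U : (1:ℝ) ∈ U := hUIcc ⟨zero_le_one, le_rfl⟩
  have hfdd : HasDerivAt (deriv f) (deriv (deriv f) 1) 1 := by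
    have : ContDiffOn ℝ 1 (deriv f) U := hf.deriv_of_isOpen hU (by norm_num)
    exact ((this.differentiableOn (by norm_num)).differentiableAt (hU.mem_nhds h1U)).hasDerivAt
  have hsub : ∀ x : ℝ, HasDerivAt (fun x : ℝ => 1 - x) (-1) x := fun x =>
    (hasDerivAt_id x).const_sub 1
  have hmem : ∀ x ∈ Set.Icc (0:ℝ) 1, 1 - x ∈ Set.Icc (0:ℝ) 1 := fun x hx =>
    ⟨by linarith [hx.2], by linarith [hx.1]⟩
  have h0 : ∀ x ∈ Set.Icc (0:ℝ) 1, HasDerivAt (fun x => 4 * (1 - x) * F (1 - x))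
      (-4 * F (1 - x) + 4 * (1 - x) * f (1 - x)) x := by
    intro x hx
    have := ((hsub x).const_mul 4).mul ((hFd _ (hmem x hx)).comp x (hsub x))
    refine this.congr_deriv ?_
    simp [Function.comp]
  have h1 : ∀ x ∈ Set.Icc (0:ℝ) 1, HasDerivAt (fun x => -4 * F (1 - x) + 4 * (1 - x) * f (1 - x))
      (-8 * f (1 - x) - 4 * (1 - x) * deriv f (1 - x)) x := by
    intro x hx
    have := (((hFd _ (hmem x hx)).comp x (hsub x)).const_mul (-4)).add
      (((hsub x).const_mul 4).mul ((hfd _ (hmem x hx)).comp x (hsub x)))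
    refine this.congr_deriv ?_
    simp [Function.comp]; ring
  have h2 : HasDerivAt (fun x => -8 * f (1 - x) - 4 * (1 - x) * deriv f (1 - x)) (2 * k) 0 := by
    have hfdd' : HasDerivAt (deriv f) (deriv (deriv f) 1) (1 - 0) := by simpa using hfdd
    have := (((hfd _ (hmem 0 ⟨le_rfl, zero_le_one⟩)).comp 0 (hsub 0)).const_mul (-8)).sub
      (((hsub 0).const_mul 4).mul (hfdd'.comp 0 (hsub 0)))
    refine this.congr_deriv ?_
    simp [Function.comp, hk]; ring
  refine aux_main (fun x => 4 * (1 - x) * F (1 - x)) cs k hcs0 hk0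
    (fun x hx => (h0 x hx).continuousAt.continuousWithinAt) ?_ c₀ hc₀ hc₀cs ξ hξmem hzero hξ0 P hP
  intro ε hε
  exact aux_taylor _ _ _ (cs ^ 2) k h0 h1 h2 (by simp [hF]) (by simp [hF, hf1])
    (by simp [hf1, hcs2]; ring) ε hε
end

section
/- Assume k := 2 f''(1) + 6 f'(1) ≠ 0. Let 0 < c₀ < c_s and let ξ : (c₀, c_s) → (0,1) be continuously differentiable and satisfy, for every c ∈ (c₀, c_s): N_c(ξ(c)) = 0, N_c(x) < 0 for every x ∈ (0, ξ(c)), ∂_x N_c(ξ(c)) > 0, and ξ(c) → 0 as c → c_s⁻. Define P(c) := (c/2) ∫_0^{ξ(c)} x² / ((1−x) √(−N_c(x))) dx. Then there exists c₁ ∈ (c₀, c_s) such that P is differentiable on (c₁, c_s) and P'(c)/ν_c → −18 c_s² / k² as c → c_s⁻. -/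
open Real MeasureTheory Filter Topology

lemma aux_mem {δ s t : ℝ} (hs : s ∈ Set.Ioo (-δ) δ) (ht : t ∈ Set.Icc (0:ℝ) 1) :
    s * t ∈ Set.Ioo (-δ) δ := by
  rw [Set.mem_Ioo, ← abs_lt] at *
  rw [abs_mul, abs_of_nonneg ht.1]
  nlinarith [abs_nonneg s, ht.1, ht.2]

lemma aux_meas {δ : ℝ} {ω v : ℝ → ℝ} (hω : IntervalIntegrable ω volume 0 1)
    (hv : ContinuousOn v (Set.Ioo (-δ) δ)) {s : ℝ} (hs : s ∈ Set.Ioo (-δ) δ) :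
    AEStronglyMeasurable (fun t => ω t * v (s * t)) (volume.restrict (Set.uIoc 0 1)) := by
  refine AEStronglyMeasurable.mul hω.def'.aestronglyMeasurable ?_
  have : ContinuousOn (fun t => v (s * t)) (Set.uIoc (0:ℝ) 1) := by
    refine hv.comp (by fun_prop) ?_
    intro t ht
    rw [Set.uIoc_of_le zero_le_one] at ht
    exact aux_mem hs ⟨ht.1.le, ht.2⟩
  exact this.aestronglyMeasurable measurableSet_uIoc

lemma aux_bound {δ : ℝ} {v : ℝ → ℝ} (hv : ContinuousOn v (Set.Ioo (-δ) δ)) {s : ℝ}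
    (hs : s ∈ Set.Ioo (-δ) δ) :
    ∃ r C : ℝ, s ∈ Set.Ioo (-r) r ∧ r < δ ∧ 0 ≤ C ∧ ∀ x ∈ Set.Ioo (-r) r, ‖v x‖ ≤ C := by
  have h1 : |s| < δ := abs_lt.2 hs
  obtain ⟨r, hr1, hr2⟩ := exists_between h1
  obtain ⟨C, hC⟩ := (isCompact_Icc (a := -r) (b := r)).exists_bound_of_continuousOn
    (hv.mono (fun x hx => ⟨by linarith [hx.1], by linarith [hx.2]⟩))
  refine ⟨r, C, abs_lt.1 hr1, hr2, ?_, fun x hx => hC x ⟨hx.1.le, hx.2.le⟩⟩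
  have := hC s ⟨(abs_lt.1 hr1).1.le, (abs_lt.1 hr1).2.le⟩
  exact (norm_nonneg _).trans this

lemma aux_cont {δ : ℝ} {ω v : ℝ → ℝ} (hω : IntervalIntegrable ω volume 0 1)
    (hv : ContinuousOn v (Set.Ioo (-δ) δ)) :
    ContinuousOn (fun s => ∫ t in (0:ℝ)..1, ω t * v (s * t)) (Set.Ioo (-δ) δ) := by
  intro s hs
  apply ContinuousAt.continuousWithinAt
  obtain ⟨r, C, hsr, hrδ, hC0, hC⟩ := aux_bound hv hs
  refine intervalIntegral.continuousAt_of_dominated_interval (bound := fun t => ‖ω t‖ * C) ?_ ?_ ?_ ?_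
  · filter_upwards [isOpen_Ioo.mem_nhds hs] with x hx using aux_meas hω hv hx
  · filter_upwards [isOpen_Ioo.mem_nhds hsr] with x hx
    refine Eventually.of_forall fun t ht => ?_
    rw [Set.uIoc_of_le zero_le_one] at ht
    rw [norm_mul]
    gcongr
    exact hC _ (aux_mem hx ⟨ht.1.le, ht.2⟩)
  · exact hω.norm.mul_const C
  · refine Eventually.of_forall fun t ht => ?_
    rw [Set.uIoc_of_le zero_le_one] at ht
    have h2 : ContinuousAt v (s * t) :=
      hv.continuousAt (isOpen_Ioo.mem_nhds (aux_mem hs ⟨ht.1.le, ht.2⟩))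
    have h3 : ContinuousAt (fun x : ℝ => x * t) s := by fun_prop
    exact continuousAt_const.mul (ContinuousAt.comp (f := fun x : ℝ => x * t) h2 h3)

lemma aux_mul {ω : ℝ → ℝ} (hω : IntervalIntegrable ω volume 0 1) :
    IntervalIntegrable (fun t => ω t * t) volume 0 1 :=
  hω.mul_continuousOn continuousOn_id

lemma aux_int_s12 {δ : ℝ} {ω v : ℝ → ℝ} (hω : IntervalIntegrable ω volume 0 1)
    (hv : ContinuousOn v (Set.Ioo (-δ) δ)) {s : ℝ} (hs : s ∈ Set.Ioo (-δ) δ) :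
    IntervalIntegrable (fun t => ω t * v (s * t)) volume 0 1 := by
  refine hω.mul_continuousOn ?_
  refine hv.comp (by fun_prop) ?_
  intro t ht
  rw [Set.uIcc_of_le zero_le_one] at ht
  exact aux_mem hs ht

lemma aux_deriv {δ : ℝ} {ω v : ℝ → ℝ} (hω : IntervalIntegrable ω volume 0 1)
    (hv : ContDiffOn ℝ 1 v (Set.Ioo (-δ) δ)) {s : ℝ} (hs : s ∈ Set.Ioo (-δ) δ) :
    HasDerivAt (fun s => ∫ t in (0:ℝ)..1, ω t * v (s * t))
      (∫ t in (0:ℝ)..1, (ω t * t) * deriv v (s * t)) s := by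
  have hd : ContinuousOn (deriv v) (Set.Ioo (-δ) δ) :=
    hv.continuousOn_deriv_of_isOpen isOpen_Ioo le_rfl
  have hdiff : ∀ x ∈ Set.Ioo (-δ) δ, HasDerivAt v (deriv v x) x := fun x hx =>
    ((hv.differentiableOn one_ne_zero).differentiableAt (isOpen_Ioo.mem_nhds hx)).hasDerivAt
  obtain ⟨r, C, hsr, hrδ, hC0, hC⟩ := aux_bound hd hs
  have hsub : Set.Ioo (-r) r ⊆ Set.Ioo (-δ) δ :=
    fun x hx => ⟨by linarith [hx.1], by linarith [hx.2]⟩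
  refine (intervalIntegral.hasDerivAt_integral_of_dominated_loc_of_deriv_le
    (F := fun s t => ω t * v (s * t)) (F' := fun s t => (ω t * t) * deriv v (s * t))
    (bound := fun t => ‖ω t * t‖ * C) (isOpen_Ioo.mem_nhds hsr) ?_ ?_ ?_ ?_ ?_ ?_).2
  · filter_upwards [isOpen_Ioo.mem_nhds hs] with x hx using aux_meas hω hv.continuousOn hx
  · exact aux_int_s12 hω hv.continuousOn hs
  · exact aux_meas (aux_mul hω) hd hs
  · refine Eventually.of_forall fun t ht x hx => ?_
    rw [Set.uIoc_of_le zero_le_one] at ht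
    rw [norm_mul]
    gcongr
    exact hC _ (aux_mem hx ⟨ht.1.le, ht.2⟩)
  · exact (aux_mul hω).norm.mul_const C
  · refine Eventually.of_forall fun t ht x hx => ?_
    rw [Set.uIoc_of_le zero_le_one] at ht
    have h2 := hdiff (x * t) (aux_mem (hsub hx) ⟨ht.1.le, ht.2⟩)
    have h3 : HasDerivAt (fun x : ℝ => x * t) t x := by
      simpa using (hasDerivAt_id x).mul_const t
    have := (h2.comp x h3).const_mul (ω t)
    have e : ω t * t * deriv v (x * t) = ω t * (deriv v (x * t) * t) := by ring
    simp only [e]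
    exact this

lemma aux_contDiff (n : ℕ) {δ : ℝ} : ∀ {ω v : ℝ → ℝ} (_ : IntervalIntegrable ω volume 0 1)
    (_ : ContDiffOn ℝ n v (Set.Ioo (-δ) δ)),
    ContDiffOn ℝ n (fun s => ∫ t in (0:ℝ)..1, ω t * v (s * t)) (Set.Ioo (-δ) δ) := by
  induction n with
  | zero =>
    intro ω v hω hv
    simp only [Nat.cast_zero, contDiffOn_zero] at *
    exact aux_cont hω hv
  | succ n ih =>
    intro ω v hω hv
    have h1 : ContDiffOn ℝ 1 v (Set.Ioo (-δ) δ) := hv.of_le (by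
      exact_mod_cast Nat.le_add_left 1 n)
    push_cast at hv ⊢
    rw [contDiffOn_succ_iff_deriv_of_isOpen isOpen_Ioo] at hv ⊢
    refine ⟨fun s hs => (aux_deriv hω h1 hs).differentiableAt.differentiableWithinAt, by simp, ?_⟩
    exact (ih (aux_mul hω) hv.2.2).congr fun s hs => (aux_deriv hω h1 hs).deriv

lemma aux_omega : IntervalIntegrable (fun t : ℝ => 1 / √(1 - t)) volume 0 1 := by
  have h : IntervalIntegrable (fun x : ℝ => x ^ (-(1/2) : ℝ)) volume 0 1 :=
    intervalIntegral.intervalIntegrable_rpow' (by norm_num)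
  have h2 := (h.comp_sub_left 1).symm
  norm_num at h2
  refine h2.congr ?_
  intro t ht
  rw [Set.uIoc_of_le zero_le_one] at ht
  have : (0:ℝ) ≤ 1 - t := by linarith [ht.2]
  simp only
  rw [rpow_neg this, sqrt_eq_rpow]
  simp

lemma aux_omega_int : ∫ t in (0:ℝ)..1, 1 / √(1 - t) * t = 4 / 3 := by
  have e : ∫ t in (0:ℝ)..1, 1 / √(1 - t) * t =
      ∫ t in (0:ℝ)..1, (fun x : ℝ => x ^ (-(1/2) : ℝ) - x ^ (1/2 : ℝ)) (1 - t) := by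
    rw [intervalIntegral.integral_of_le zero_le_one, intervalIntegral.integral_of_le zero_le_one,
      integral_Ioc_eq_integral_Ioo, integral_Ioc_eq_integral_Ioo]
    refine setIntegral_congr_fun measurableSet_Ioo ?_
    intro t ht
    have h0 : (0:ℝ) < 1 - t := by linarith [ht.2]
    simp only
    rw [rpow_neg h0.le, ← sqrt_eq_rpow]
    have := sqrt_pos.2 h0
    have h3 := sq_sqrt h0.le
    field_simp
    linarith
  rw [e, intervalIntegral.integral_comp_sub_left (fun x : ℝ => x ^ (-(1/2) : ℝ) - x ^ (1/2 : ℝ)) 1]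
  rw [intervalIntegral.integral_sub (intervalIntegral.intervalIntegrable_rpow' (by norm_num))
    (intervalIntegral.intervalIntegrable_rpow' (by norm_num))]
  rw [integral_rpow (by norm_num), integral_rpow (by norm_num)]
  norm_num

lemma aux_K {δ : ℝ} (hδ : 0 < δ) {f F : ℝ → ℝ}
    (hf : ContDiffOn ℝ 3 f (Set.Ioo (1 - δ) (1 + δ))) (hf1 : f 1 = 0)
    (hF : ∀ r, F r = ∫ ρ in r..1, f ρ) :
    ∃ K : ℝ → ℝ, ContDiffOn ℝ 2 K (Set.Ioo (-δ) δ) ∧ K 0 = -(deriv f 1) / 2 ∧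
      HasDerivAt K (deriv (deriv f) 1 / 6) 0 ∧
      ∀ x ∈ Set.Ioo (-δ) δ, F (1 - x) = x ^ 2 * K x := by
  have h0 : (0:ℝ) ∈ Set.Ioo (-δ) δ := ⟨by linarith, hδ⟩
  have hmaps : ∀ y ∈ Set.Ioo (-δ) δ, (1 - y) ∈ Set.Ioo (1 - δ) (1 + δ) := fun y hy =>
    ⟨by linarith [hy.2], by linarith [hy.1]⟩
  have hd2 : ContDiffOn ℝ 2 (deriv f) (Set.Ioo (1 - δ) (1 + δ)) := by
    have := (contDiffOn_succ_iff_deriv_of_isOpen (n := 2) isOpen_Ioo).1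
      (by norm_num; exact hf)
    exact this.2.2
  have hm : ContDiffOn ℝ 2 (fun y => -deriv f (1 - y)) (Set.Ioo (-δ) δ) :=
    (hd2.comp (g := deriv f) (f := fun y : ℝ => 1 - y) (by fun_prop) hmaps).neg
  have hω : IntervalIntegrable (fun t : ℝ => 1 - t) volume 0 1 :=
    (by fun_prop : Continuous fun t : ℝ => 1 - t).intervalIntegrable _ _
  have hfd : ∀ x ∈ Set.Ioo (1 - δ) (1 + δ), HasDerivAt f (deriv f x) x := fun x hx =>
    ((hf.differentiableOn (by norm_num)).differentiableAt (isOpen_Ioo.mem_nhds hx)).hasDerivAt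
  refine ⟨fun x => ∫ t in (0:ℝ)..1, (1 - t) * (-deriv f (1 - x * t)), ?_, ?_, ?_, ?_⟩
  · exact aux_contDiff 2 (v := fun y => -deriv f (1 - y)) hω hm
  · simp only [zero_mul, sub_zero]
    rw [intervalIntegral.integral_mul_const]
    have : ∫ t in (0:ℝ)..1, (1 - t) = 1 / 2 := by
      rw [intervalIntegral.integral_sub (by simp) (by simp)]
      simp; norm_num
    rw [this]; ring
  · have := aux_deriv hω (hm.of_le (by norm_num)) h0
    convert this using 1
    have e : deriv (fun y => -deriv f (1 - y)) 0 = deriv (deriv f) 1 := by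
      have h1 : HasDerivAt (deriv f) (deriv (deriv f) 1) (1 - 0) := by
        rw [sub_zero]
        exact ((hd2.differentiableOn (by norm_num)).differentiableAt
          (isOpen_Ioo.mem_nhds ⟨by linarith, by linarith⟩)).hasDerivAt
      have h2 : HasDerivAt (fun y : ℝ => 1 - y) (-1) 0 := by
        simpa using (hasDerivAt_id (0:ℝ)).const_sub 1
      have := (h1.comp (0:ℝ) h2).neg
      exact this.deriv.trans (by ring)
    simp only [zero_mul, e]
    rw [intervalIntegral.integral_mul_const]
    have : ∫ t in (0:ℝ)..1, (1 - t) * t = 1 / 6 := by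
      have : ∀ t : ℝ, (1 - t) * t = t - t ^ 2 := fun t => by ring
      simp only [this]
      rw [intervalIntegral.integral_sub (by simp) (by simp)]
      simp; norm_num
    rw [this]; ring
  · intro x hx
    have hFd : ∀ y ∈ Set.Ioo (-δ) δ, HasDerivAt F (-f (1 - y)) (1 - y) := by
      intro y hy
      have hFe : F = fun r => ∫ ρ in r..1, f ρ := funext hF
      rw [hFe]
      apply intervalIntegral.integral_hasDerivAt_left
      · apply ContinuousOn.intervalIntegrable
        refine hf.continuousOn.mono ?_
        exact Set.OrdConnected.uIcc_subset Set.ordConnected_Ioo (hmaps y hy)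
          ⟨by linarith, by linarith⟩
      · exact hf.continuousOn.stronglyMeasurableAtFilter isOpen_Ioo _ (hmaps y hy)
      · exact hf.continuousOn.continuousAt (isOpen_Ioo.mem_nhds (hmaps y hy))
    have hder : ∀ t ∈ Set.uIcc (0:ℝ) 1, HasDerivAt
        (fun t => (1 - t) * (x * f (1 - x * t)) + F (1 - x * t))
        (x ^ 2 * ((1 - t) * (-deriv f (1 - x * t)))) t := by
      intro t ht
      rw [Set.uIcc_of_le zero_le_one] at ht
      have hxt := aux_mem hx ht
      have h1 : HasDerivAt (fun t : ℝ => 1 - x * t) (-x) t := by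
        simpa using ((hasDerivAt_id t).const_mul x).const_sub 1
      have h2 : HasDerivAt (fun t : ℝ => f (1 - x * t)) (deriv f (1 - x * t) * (-x)) t :=
        HasDerivAt.comp t (hfd _ (hmaps _ hxt)) h1
      have h3 : HasDerivAt (fun t : ℝ => F (1 - x * t)) (-f (1 - x * t) * (-x)) t :=
        HasDerivAt.comp t (hFd _ hxt) h1
      have h4 : HasDerivAt (fun t : ℝ => 1 - t) (-1) t := by
        simpa using (hasDerivAt_id t).const_sub 1
      have := (h4.mul (h2.const_mul x)).add h3
      refine this.congr_deriv ?_
      ring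
    have hint := aux_int_s12 hω hm.continuousOn hx
    have := intervalIntegral.integral_eq_sub_of_hasDerivAt hder (hint.const_mul (x ^ 2))
    rw [intervalIntegral.integral_const_mul] at this
    have hF1 : F 1 = 0 := by rw [hF]; simp
    simp only [mul_zero, sub_zero, mul_one, sub_self, zero_mul, zero_add, hf1, hF1] at this
    exact this.symm

lemma aux_inv {u : ℝ → ℝ} {a : ℝ} (hu : ContDiffAt ℝ 2 u 0) (hu0 : u 0 = 0)
    (hua : HasDerivAt u a 0) (ha : 0 < a) {ε : ℝ} (hε : 0 < ε) :
    ∃ φ : ℝ → ℝ, ∃ δ > 0, φ 0 = 0 ∧ (∀ᶠ x in 𝓝 0, φ (u x) = x) ∧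
      (∀ y ∈ Set.Ioo (-δ) δ, HasDerivAt φ (deriv φ y) y ∧ 0 < deriv φ y ∧ φ y < 1 ∧
        φ y ∈ Set.Ioo (-ε) ε ∧ u (φ y) = y) ∧
      ContDiffOn ℝ 1 (fun y => φ y * deriv φ y / (1 - φ y)) (Set.Ioo (-δ) δ) ∧
      deriv (fun y => φ y * deriv φ y / (1 - φ y)) 0 = 1 / a ^ 2 := by
  have hf' := hua.hasFDerivAt_equiv ha.ne'
  have hstr := hu.hasStrictFDerivAt' hf' two_ne_zero
  set φ : ℝ → ℝ := hu.localInverse hf' two_ne_zero with hφ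
  have hleft : ∀ᶠ x in 𝓝 0, φ (u x) = x := hstr.eventually_left_inverse
  have hright : ∀ᶠ y in 𝓝 0, u (φ y) = y := by
    have := hstr.eventually_right_inverse
    rwa [hu0] at this
  have hφc : ContDiffAt ℝ 2 φ 0 := by
    have := hu.to_localInverse hf' two_ne_zero
    rwa [hu0] at this
  have hφ0 : φ 0 = 0 := by
    have := hleft.self_of_nhds
    rwa [hu0] at this
  have hφd : HasDerivAt φ (deriv φ 0) 0 := (hφc.differentiableAt two_ne_zero).hasDerivAt
  have hdφ : ContDiffAt ℝ 1 (deriv φ) 0 := hφc.derivWithin (by norm_num)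
  have hval : deriv φ 0 = 1 / a := by
    have h1 : HasDerivAt φ (deriv φ 0) (u 0) := by rw [hu0]; exact hφd
    have h2 := h1.comp (0:ℝ) hua
    have h3 : HasDerivAt (φ ∘ u) 1 0 := (hasDerivAt_id (0:ℝ)).congr_of_eventuallyEq hleft
    have := h2.unique h3
    field_simp; exact this
  have hw : ContDiffAt ℝ 1 (fun y => φ y * deriv φ y / (1 - φ y)) 0 := by
    refine ContDiffAt.div ((hφc.of_le (by norm_num)).mul hdφ)
      (contDiffAt_const.sub (hφc.of_le (by norm_num))) ?_
    rw [hφ0]; norm_num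
  have e1 := hφc.eventually (by norm_num)
  have e2 : ∀ᶠ y in 𝓝 0, 0 < deriv φ y :=
    hdφ.continuousAt.eventually (lt_mem_nhds (by rw [hval]; positivity))
  have e3 : ∀ᶠ y in 𝓝 0, φ y < 1 :=
    hφc.continuousAt.eventually (gt_mem_nhds (by rw [hφ0]; norm_num))
  have e4 : ∀ᶠ y in 𝓝 0, φ y ∈ Set.Ioo (-ε) ε :=
    hφc.continuousAt.eventually (isOpen_Ioo.mem_nhds (by rw [hφ0]; exact ⟨by linarith, hε⟩))
  have e5 := hw.eventually (by norm_num)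
  obtain ⟨δ, hδ, hall⟩ := Metric.eventually_nhds_iff.1 
    ((e1.and e2).and ((e3.and e4).and (e5.and hright)))
  have hall' : ∀ y ∈ Set.Ioo (-δ) δ, _ := fun y hy =>
    hall (y := y) (by rw [Real.dist_eq, sub_zero]; exact abs_lt.2 hy)
  refine ⟨φ, δ, hδ, hφ0, hleft, ?_, ?_, ?_⟩
  · intro y hy
    obtain ⟨⟨a1, a2⟩, ⟨a3, a4⟩, a5, a6⟩ := hall' y hy
    exact ⟨(a1.differentiableAt two_ne_zero).hasDerivAt, a2, a3, a4, a6⟩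
  · intro y hy
    obtain ⟨⟨a1, a2⟩, ⟨a3, a4⟩, a5, a6⟩ := hall' y hy
    exact a5.contDiffWithinAt
  · have hdd : HasDerivAt (deriv φ) (deriv (deriv φ) 0) 0 :=
      (hdφ.differentiableAt one_ne_zero).hasDerivAt
    have := (hφd.mul hdd).div (hφd.const_sub 1) (by rw [hφ0]; norm_num)
    have := this.deriv
    simp only [hφ0, hval, Pi.mul_apply] at this
    refine Eq.trans this ?_
    field_simp
    ring

lemma aux_final {cs c₀ δ q : ℝ} {P Q Q' : ℝ → ℝ} (hc₀ : 0 < c₀) (hc : c₀ < cs) (hδ : 0 < δ)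
    (hQ : ∀ s ∈ Set.Ioo (-δ) δ, HasDerivAt Q (Q' s) s) (hQ0 : Q 0 = 0)
    (hQc : ContinuousAt Q' 0) (hq : Q' 0 = q)
    (hP : ∀ᶠ c in 𝓝[<] cs, P c = c / 2 * (√(cs ^ 2 - c ^ 2) * Q (cs ^ 2 - c ^ 2))) :
    ∃ c₁ ∈ Set.Ioo c₀ cs, (∀ c ∈ Set.Ioo c₁ cs, DifferentiableAt ℝ P c) ∧
      Tendsto (fun c => deriv P c / √(cs ^ 2 - c ^ 2)) (𝓝[<] cs)
        (𝓝 (-(3 / 2) * cs ^ 2 * q)) := by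
  have hs0 : Tendsto (fun c : ℝ => cs ^ 2 - c ^ 2) (𝓝[<] cs) (𝓝 0) := by
    have : Continuous fun c : ℝ => cs ^ 2 - c ^ 2 := by fun_prop
    have := this.tendsto cs
    simp only [sub_self] at this
    exact this.mono_left nhdsWithin_le_nhds
  have hev : ∀ᶠ c in 𝓝[<] cs, cs ^ 2 - c ^ 2 ∈ Set.Ioo (-δ) δ :=
    hs0.eventually (isOpen_Ioo.mem_nhds ⟨by linarith, hδ⟩)
  obtain ⟨l, hl, hl2⟩ := (mem_nhdsLT_iff_exists_Ioo_subset' (by linarith : c₀ < cs)).1 (hP.and hev)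
  have hlcs : l < cs := hl
  obtain ⟨c₁, hc₁, hc₁'⟩ := exists_between (max_lt hc hlcs)
  have hc₁0 : c₀ < c₁ := (le_max_left _ _).trans_lt hc₁
  have hlc₁ : l < c₁ := (le_max_right _ _).trans_lt hc₁
  have key : ∀ c ∈ Set.Ioo c₁ cs, 0 < cs ^ 2 - c ^ 2 ∧ HasDerivAt P
      (1 / 2 * (√(cs ^ 2 - c ^ 2) * Q (cs ^ 2 - c ^ 2)) +
        c / 2 * (-(2 * c) / (2 * √(cs ^ 2 - c ^ 2)) * Q (cs ^ 2 - c ^ 2) +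
          √(cs ^ 2 - c ^ 2) * (Q' (cs ^ 2 - c ^ 2) * -(2 * c)))) c := by
    intro c hcm
    have hpos : 0 < cs ^ 2 - c ^ 2 := by nlinarith [hcm.1, hcm.2]
    refine ⟨hpos, ?_⟩
    have h1 : HasDerivAt (fun c : ℝ => cs ^ 2 - c ^ 2) (-(2 * c)) c := by
      simpa using (hasDerivAt_pow 2 c).const_sub (cs ^ 2)
    have h2 := h1.sqrt hpos.ne'
    have h3 : HasDerivAt (fun c : ℝ => Q (cs ^ 2 - c ^ 2)) (Q' (cs ^ 2 - c ^ 2) * -(2 * c)) c :=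
      HasDerivAt.comp c (hQ _ (hl2 ⟨by linarith [hcm.1], hcm.2⟩).2) h1
    have h4 : HasDerivAt (fun c : ℝ => c / 2) (1 / 2) c := (hasDerivAt_id c).div_const 2
    have h5 := h4.mul (h2.mul h3)
    refine h5.congr_of_eventuallyEq ?_
    filter_upwards [isOpen_Ioo.mem_nhds hcm] with x hx
    exact (hl2 ⟨by linarith [hx.1], hx.2⟩).1
  refine ⟨c₁, ⟨hc₁0, hc₁'⟩, fun c hcm => (key c hcm).2.differentiableAt, ?_⟩
  have hmem : Set.Ioo c₁ cs ∈ 𝓝[<] cs := Ioo_mem_nhdsLT hc₁'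
  have hs0' : Tendsto (fun c : ℝ => cs ^ 2 - c ^ 2) (𝓝[<] cs) (𝓝[≠] 0) := by
    refine tendsto_nhdsWithin_iff.2 ⟨hs0, ?_⟩
    filter_upwards [hmem] with c hcm using (key c hcm).1.ne'
  have h0 := hQ 0 ⟨by linarith, hδ⟩
  have t1 : Tendsto (fun c => Q (cs ^ 2 - c ^ 2)) (𝓝[<] cs) (𝓝 0) := by
    have := h0.continuousAt.tendsto.comp hs0
    rwa [hQ0] at this
  have t2 : Tendsto (fun c => Q' (cs ^ 2 - c ^ 2)) (𝓝[<] cs) (𝓝 q) := by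
    have := hQc.tendsto.comp hs0
    rwa [hq] at this
  have t3 : Tendsto (fun c => slope Q 0 (cs ^ 2 - c ^ 2)) (𝓝[<] cs) (𝓝 q) := by
    have := h0.tendsto_slope.comp hs0'
    rwa [hq] at this
  have t4 : Tendsto (fun c : ℝ => c) (𝓝[<] cs) (𝓝 cs) := tendsto_id.mono_left nhdsWithin_le_nhds
  have t5 := (t1.const_mul (1 / 2)).sub ((t4.pow 2).mul ((t3.div_const 2).add t2))
  have e : 1 / 2 * 0 - cs ^ 2 * (q / 2 + q) = -(3 / 2) * cs ^ 2 * q := by ring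
  rw [e] at t5
  refine t5.congr' ?_
  filter_upwards [hmem] with c hcm
  obtain ⟨hpos, hd⟩ := key c hcm
  rw [hd.deriv, slope_def_field, hQ0]
  have hsq := sq_sqrt hpos.le
  have hsp := sqrt_pos.2 hpos
  set r := √(cs ^ 2 - c ^ 2)
  rw [← hsq] at *
  simp only [sub_zero]
  field_simp
  ring

/-- Transonic asymptotics of the derivative of the momentum:
`P'(c)/ν_c → -18c_s²/k²` as `c → c_s⁻`. -/
theorem stmt_12 (f : ℝ → ℝ) (U : Set ℝ) (hU : IsOpen U) (hUIcc : Set.Icc (0:ℝ) 1 ⊆ U)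
    (hf : ContDiffOn ℝ 3 f U) (hf1 : f 1 = 0) (hf'1 : deriv f 1 < 0)
    (cs k : ℝ) (hcs : cs = Real.sqrt (-(2 * deriv f 1)))
    (hk : k = 2 * deriv (deriv f) 1 + 6 * deriv f 1) (hk0 : k ≠ 0)
    (F : ℝ → ℝ) (hF : ∀ r, F r = ∫ ρ in r..1, f ρ)
    (c₀ : ℝ) (hc₀ : 0 < c₀) (hc₀cs : c₀ < cs)
    (ξ : ℝ → ℝ) (hξC1 : ContDiffOn ℝ 1 ξ (Set.Ioo c₀ cs))
    (hξmem : ∀ c ∈ Set.Ioo c₀ cs, ξ c ∈ Set.Ioo (0:ℝ) 1)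
    (hzero : ∀ c ∈ Set.Ioo c₀ cs,
      c ^ 2 * (ξ c) ^ 2 - 4 * (1 - ξ c) * F (1 - ξ c) = 0)
    (hneg : ∀ c ∈ Set.Ioo c₀ cs, ∀ x ∈ Set.Ioo 0 (ξ c),
      c ^ 2 * x ^ 2 - 4 * (1 - x) * F (1 - x) < 0)
    (hdN : ∀ c ∈ Set.Ioo c₀ cs,
      0 < deriv (fun x => c ^ 2 * x ^ 2 - 4 * (1 - x) * F (1 - x)) (ξ c))
    (hξ0 : Tendsto ξ (𝓝[<] cs) (𝓝 0))
    (P : ℝ → ℝ)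
    (hP : ∀ c, P c = (c / 2) * ∫ x in (0:ℝ)..(ξ c),
      x ^ 2 / ((1 - x) * Real.sqrt (-(c ^ 2 * x ^ 2 - 4 * (1 - x) * F (1 - x))))) :
    ∃ c₁ ∈ Set.Ioo c₀ cs,
      (∀ c ∈ Set.Ioo c₁ cs, DifferentiableAt ℝ P c) ∧
      Tendsto (fun c => deriv P c / Real.sqrt (cs ^ 2 - c ^ 2)) (𝓝[<] cs)
        (𝓝 (-(18 * cs ^ 2) / k ^ 2)) := by
  have hcsq : cs ^ 2 = -(2 * deriv f 1) := by
    rw [hcs]; exact sq_sqrt (by linarith)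
  obtain ⟨ε, hε, hball⟩ := Metric.isOpen_iff.1 hU 1 (hUIcc ⟨zero_le_one, le_rfl⟩)
  rw [Real.ball_eq_Ioo] at hball
  obtain ⟨K, hKc, hK0, hKd, hKF⟩ := aux_K hε (hf.mono hball) hf1 hF
  have h0ε : (0:ℝ) ∈ Set.Ioo (-ε) ε := ⟨by linarith, hε⟩
  set u : ℝ → ℝ := fun x => cs ^ 2 - 4 * (1 - x) * K x with hu
  have hu0 : u 0 = 0 := by simp only [hu, hK0, hcsq]; ring
  have huc : ContDiffAt ℝ 2 u 0 := by
    have : ContDiffAt ℝ 2 K 0 := hKc.contDiffAt (isOpen_Ioo.mem_nhds h0ε)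
    fun_prop
  have hua : HasDerivAt u (-k / 3) 0 := by
    have h1 : HasDerivAt (fun x : ℝ => 4 * (1 - x)) (4 * (-1)) 0 := 
      HasDerivAt.const_mul 4 (by simpa using (hasDerivAt_id (0:ℝ)).const_sub 1)
    have := (h1.mul hKd).const_sub (cs ^ 2)
    refine this.congr_deriv ?_
    rw [hK0, hk]; ring
  have hmem : Set.Ioo c₀ cs ∈ 𝓝[<] cs := Ioo_mem_nhdsLT hc₀cs
  have hξε : ∀ᶠ c in 𝓝[<] cs, ξ c ∈ Set.Ioo (-ε) ε := hξ0.eventually (isOpen_Ioo.mem_nhds h0ε)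
  have huξ : ∀ c ∈ Set.Ioo c₀ cs, ξ c ∈ Set.Ioo (-ε) ε → u (ξ c) = cs ^ 2 - c ^ 2 := by
    intro c hc hcε
    have h1 := hzero c hc
    rw [hKF _ hcε] at h1
    have h2 : (ξ c) ^ 2 ≠ 0 := pow_ne_zero _ (hξmem c hc).1.ne'
    have h3 : (ξ c) ^ 2 * (c ^ 2 - 4 * (1 - ξ c) * K (ξ c)) = 0 := by linarith
    have h4 := (mul_eq_zero.1 h3).resolve_left h2
    simp only [hu]; linarith
  have ha : 0 < -k / 3 := by
    have hξ0' : Tendsto ξ (𝓝[<] cs) (𝓝[≠] 0) := by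
      refine tendsto_nhdsWithin_iff.2 ⟨hξ0, ?_⟩
      filter_upwards [hmem] with c hc using (hξmem c hc).1.ne'
    have h1 := hua.tendsto_slope.comp hξ0'
    have h2 : 0 ≤ -k / 3 := by
      refine ge_of_tendsto h1 ?_
      filter_upwards [hmem, hξε] with c hc hcε
      simp only [Function.comp, slope_def_field]
      rw [huξ c hc hcε, hu0, sub_zero, sub_zero]
      refine div_nonneg ?_ (hξmem c hc).1.le
      nlinarith [hc.1, hc.2]
    refine lt_of_le_of_ne h2 (fun h => hk0 (by linarith))
  obtain ⟨φ, δ, hδ, hφ0, hleft, hφ, hw, hw'⟩ := aux_inv huc hu0 hua ha hε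
  set w : ℝ → ℝ := fun y => φ y * deriv φ y / (1 - φ y) with hwdef
  have h0δ : (0:ℝ) ∈ Set.Ioo (-δ) δ := ⟨by linarith, hδ⟩
  have hfin := aux_final (P := P) (Q := fun s => ∫ t in (0:ℝ)..1, 1 / √(1 - t) * w (s * t))
    (Q' := fun s => ∫ t in (0:ℝ)..1, 1 / √(1 - t) * t * deriv w (s * t))
    (q := 4 / 3 * (1 / (-k / 3) ^ 2)) hc₀ hc₀cs hδ
    (fun s hs => aux_deriv aux_omega hw hs) (by simp [hwdef, hφ0])
    ((aux_cont (aux_mul aux_omega)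
      (hw.continuousOn_deriv_of_isOpen isOpen_Ioo le_rfl)).continuousAt (isOpen_Ioo.mem_nhds h0δ))
    (by
      simp only [zero_mul]
      rw [intervalIntegral.integral_mul_const, aux_omega_int, hw']) ?_
  · have e : -(3 / 2) * cs ^ 2 * (4 / 3 * (1 / (-k / 3) ^ 2)) = -(18 * cs ^ 2) / k ^ 2 := by
      field_simp; ring
    rw [e] at hfin
    exact hfin
  have hs0 : Tendsto (fun c : ℝ => cs ^ 2 - c ^ 2) (𝓝[<] cs) (𝓝 0) := by
    have : Continuous fun c : ℝ => cs ^ 2 - c ^ 2 := by fun_prop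
    have := this.tendsto cs
    simp only [sub_self] at this
    exact this.mono_left nhdsWithin_le_nhds
  filter_upwards [hmem, hξε, hξ0.eventually hleft, hs0.eventually (isOpen_Ioo.mem_nhds h0δ)]
    with c hc hcε hcl hsδ
  rw [hP]
  congr 1
  rw [huξ c hc hcε] at hcl
  have hpos : 0 < cs ^ 2 - c ^ 2 := by nlinarith [hc.1, hc.2]
  set s := cs ^ 2 - c ^ 2 with hs
  have hd : ∀ t ∈ Set.Icc (0:ℝ) 1, HasDerivAt (fun t => φ (s * t)) (s * deriv φ (s * t)) t := by
    intro t ht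
    have h1 : HasDerivAt (fun t : ℝ => s * t) s t := by
      simpa using (hasDerivAt_id t).const_mul s
    have := HasDerivAt.comp t (hφ _ (aux_mem hsδ ht)).1 h1
    rw [mul_comm s (deriv φ (s * t))]
    exact this
  have hsub := integral_Icc_deriv_smul_of_deriv_nonneg (f := fun t => φ (s * t))
    (f' := fun t => s * deriv φ (s * t)) (a := 0) (b := 1)
    (g := fun x => x ^ 2 / ((1 - x) * √(-(c ^ 2 * x ^ 2 - 4 * (1 - x) * F (1 - x)))))
    (fun t ht => (hd t ht).continuousAt.continuousWithinAt)
    (fun t ht => hd t ⟨ht.1.le, ht.2.le⟩)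
    (fun t ht => (mul_pos hpos (hφ _ (aux_mem hsδ ⟨ht.1.le, ht.2.le⟩)).2.1).le) zero_le_one
  simp only [mul_zero, mul_one, hφ0, hcl] at hsub
  rw [intervalIntegral.integral_of_le (hξmem c hc).1.le, ← integral_Icc_eq_integral_Ioc, ← hsub,
    ← intervalIntegral.integral_const_mul, intervalIntegral.integral_of_le zero_le_one,
    integral_Icc_eq_integral_Ioo, integral_Ioc_eq_integral_Ioo]
  have hmono : StrictMonoOn φ (Set.Ioo (-δ) δ) := by
    refine strictMonoOn_of_deriv_pos (convex_Ioo _ _)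
      (fun y hy => (hφ y hy).1.continuousAt.continuousWithinAt) ?_
    rw [interior_Ioo]
    exact fun y hy => (hφ y hy).2.1
  refine setIntegral_congr_fun measurableSet_Ioo ?_
  intro t ht
  have hst := aux_mem hsδ ⟨ht.1.le, ht.2.le⟩
  obtain ⟨b1, b2, b3, b4, b5⟩ := hφ _ hst
  have hxpos : 0 < φ (s * t) := by
    rw [← hφ0]; exact hmono h0δ hst (mul_pos hpos ht.1)
  have h1t : 0 < 1 - t := by linarith [ht.2]
  have hN : -(c ^ 2 * φ (s * t) ^ 2 - 4 * (1 - φ (s * t)) * F (1 - φ (s * t))) =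
      φ (s * t) ^ 2 * (s * (1 - t)) := by
    rw [hKF _ b4]
    have : 4 * (1 - φ (s * t)) * K (φ (s * t)) = cs ^ 2 - s * t := by
      simp only [hu] at b5; linarith
    have hc2 : c ^ 2 = cs ^ 2 - s := by rw [hs]; ring
    rw [hc2]
    linear_combination φ (s * t) ^ 2 * this
  simp only [smul_eq_mul, hwdef]
  rw [hN, sqrt_mul (sq_nonneg _), sqrt_sq hxpos.le, sqrt_mul hpos.le]
  have hsp := sqrt_pos.2 hpos
  have htp := sqrt_pos.2 h1t
  have hss := sq_sqrt hpos.le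
  have h1x : 0 < 1 - φ (s * t) := by linarith
  generalize φ (s * t) = x at *
  generalize deriv φ (s * t) = d at *
  field_simp
  rw [hss]
end

section
/- Assume k := 2 f''(1) + 6 f'(1) ≠ 0. Let 0 < c₀ < c_s and let ξ : (c₀, c_s) → (0,1) satisfy, for every c ∈ (c₀, c_s): N_c(ξ(c)) = 0, N_c(x) < 0 for every x ∈ (0, ξ(c)), ∂_x N_c(ξ(c)) > 0, and ξ(c) → 0 as c → c_s⁻. Then ∫_0^{ξ(c)} x / (ν_c √(−N_c(x))) dx → −6/k as c → c_s⁻. -/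
open Real MeasureTheory Filter Topology

theorem aux_B (I : ℝ → ℝ) (ξ m M : ℝ) (hξ : 0 < ξ) (hc : ContinuousOn I (Set.Ioo 0 ξ))
    (hm0 : 0 ≤ m)
    (hm : ∀ x ∈ Set.Ioo 0 ξ, m * (ξ - x) ^ (-(1/2) : ℝ) ≤ I x)
    (hM : ∀ x ∈ Set.Ioo 0 ξ, I x ≤ M * (ξ - x) ^ (-(1/2) : ℝ)) :
    2 * m * √ξ ≤ ∫ x in (0:ℝ)..ξ, I x ∧ ∫ x in (0:ℝ)..ξ, I x ≤ 2 * M * √ξ := by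
  have hint0 : IntervalIntegrable (fun x : ℝ => (ξ - x) ^ (-(1/2) : ℝ)) volume 0 ξ := by
    have h := (intervalIntegral.intervalIntegrable_rpow' (a := 0) (b := ξ)
      (r := (-(1/2) : ℝ)) (by norm_num)).comp_sub_left ξ
    simp only [sub_zero, sub_self] at h
    exact h.symm
  have hval : ∫ x in (0:ℝ)..ξ, (ξ - x) ^ (-(1/2) : ℝ) = 2 * √ξ := by
    rw [intervalIntegral.integral_comp_sub_left (fun x : ℝ => x ^ (-(1/2) : ℝ)) ξ]
    rw [sub_self, sub_zero, integral_rpow (Or.inl (by norm_num))]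
    rw [Real.zero_rpow (by norm_num), Real.sqrt_eq_rpow]
    norm_num
    ring
  have hIoo : IntegrableOn I (Set.Ioo 0 ξ) := by
    have h1 : IntegrableOn (fun x : ℝ => M * (ξ - x) ^ (-(1/2) : ℝ)) (Set.Ioo 0 ξ) := by
      have := (hint0.const_mul M)
      rw [intervalIntegrable_iff_integrableOn_Ioo_of_le hξ.le] at this
      exact this
    refine Integrable.mono' h1 (hc.aestronglyMeasurable measurableSet_Ioo) ?_
    refine (ae_restrict_iff' measurableSet_Ioo).2 (Eventually.of_forall fun x hx => ?_)
    have : 0 ≤ I x := le_trans (mul_nonneg hm0 (Real.rpow_nonneg (by linarith [hx.2]) _)) (hm x hx)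
    rw [Real.norm_of_nonneg this]
    exact hM x hx
  have hI : IntervalIntegrable I volume 0 ξ := by
    rw [intervalIntegrable_iff_integrableOn_Ioo_of_le hξ.le]; exact hIoo
  constructor
  · have := intervalIntegral.integral_mono_on_of_le_Ioo hξ.le (hint0.const_mul m) hI hm
    rw [intervalIntegral.integral_const_mul, hval] at this
    linarith
  · have := intervalIntegral.integral_mono_on_of_le_Ioo hξ.le hI (hint0.const_mul M) hM
    rw [intervalIntegral.integral_const_mul, hval] at this
    linarith

theorem aux_A (h h' : ℝ → ℝ) (b : ℝ) (hd : ∀ x ∈ Set.Ioo (0:ℝ) 1, HasDerivAt h (h' x) x)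
    (hh' : Tendsto h' (𝓝[>] 0) (𝓝 b)) (hh : Tendsto h (𝓝[>] 0) (𝓝 0)) (ε : ℝ) (hε : 0 < ε) :
    ∃ δ > 0, δ ≤ 1 ∧ ∀ y ∈ Set.Ioo 0 δ, (∀ x ∈ Set.Ioo 0 y,
      (b - ε) * (y - x) ≤ h y - h x ∧ h y - h x ≤ (b + ε) * (y - x)) ∧
      (b - ε) * y ≤ h y ∧ h y ≤ (b + ε) * y := by
  have hev : ∀ᶠ x in 𝓝[>] (0:ℝ), h' x ∈ Set.Ioo (b - ε) (b + ε) :=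
    hh' (Ioo_mem_nhds (by linarith) (by linarith))
  obtain ⟨d, hd0, hdd⟩ := mem_nhdsGT_iff_exists_Ioo_subset.1 hev
  have hd0 : 0 < d := hd0
  have key : ∀ y ∈ Set.Ioo 0 (min d 1), ∀ x ∈ Set.Ioo 0 y,
      (b - ε) * (y - x) ≤ h y - h x ∧ h y - h x ≤ (b + ε) * (y - x) := by
    intro y hy x hx
    have hy1 := lt_of_lt_of_le hy.2 (min_le_left _ _)
    have hy2 := lt_of_lt_of_le hy.2 (min_le_right _ _)
    obtain ⟨z, hz, hze⟩ := exists_hasDerivAt_eq_slope h h' hx.2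
      (fun w hw => (hd w ⟨by linarith [hx.1, hw.1], by linarith [hw.2]⟩).continuousAt.continuousWithinAt)
      (fun w hw => hd w ⟨by linarith [hx.1, hw.1], by linarith [hw.2]⟩)
    have hz2 := hdd (⟨by linarith [hx.1, hz.1], by linarith [hz.2]⟩ : z ∈ Set.Ioo 0 d)
    have hz3 : h' z ∈ Set.Ioo (b - ε) (b + ε) := hz2
    have hyx : 0 < y - x := by linarith [hx.2]
    rw [eq_div_iff hyx.ne'] at hze
    rw [← hze]
    exact ⟨mul_le_mul_of_nonneg_right hz3.1.le hyx.le, mul_le_mul_of_nonneg_right hz3.2.le hyx.le⟩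
  refine ⟨min d 1, lt_min hd0 one_pos, min_le_right _ _, fun y hy => ⟨key y hy, ?_⟩⟩
  have hIoo : Set.Ioo 0 y ∈ 𝓝[>] (0:ℝ) := Ioo_mem_nhdsGT hy.1
  have hid : Tendsto (fun x : ℝ => x) (𝓝[>] 0) (𝓝 0) := tendsto_id.mono_left nhdsWithin_le_nhds
  have t1 : Tendsto (fun x => h y - h x) (𝓝[>] 0) (𝓝 (h y)) := by
    simpa using (tendsto_const_nhds (x := h y)).sub hh
  have t2 : ∀ c : ℝ, Tendsto (fun x => c * (y - x)) (𝓝[>] 0) (𝓝 (c * y)) := fun c => by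
    simpa using ((tendsto_const_nhds (x := y)).sub hid).const_mul c
  constructor
  · exact le_of_tendsto_of_tendsto (t2 _) t1 (by filter_upwards [hIoo] with x hx using (key y hy x hx).1)
  · exact le_of_tendsto_of_tendsto t1 (t2 _) (by filter_upwards [hIoo] with x hx using (key y hy x hx).2)

theorem aux_C (f : ℝ → ℝ) (U : Set ℝ) (hU : IsOpen U) (hUIcc : Set.Icc (0:ℝ) 1 ⊆ U)
    (hf : ContDiffOn ℝ 3 f U) (hf1 : f 1 = 0)
    (F : ℝ → ℝ) (hF : ∀ r, F r = ∫ ρ in r..1, f ρ) :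
    ∃ h' : ℝ → ℝ,
      (∀ x ∈ Set.Ioo (0:ℝ) 1, HasDerivAt
        (fun x => 4 * (1 - x) * F (1 - x) / x ^ 2 + 2 * deriv f 1) (h' x) x) ∧
      Tendsto h' (𝓝[>] 0) (𝓝 ((2 * deriv (deriv f) 1 + 6 * deriv f 1) / 3)) ∧
      Tendsto (fun x => 4 * (1 - x) * F (1 - x) / x ^ 2 + 2 * deriv f 1) (𝓝[>] 0) (𝓝 0) := by
  set p := deriv f 1 with hp
  set q := deriv (deriv f) 1 with hq
  have hfd : ∀ x ∈ U, HasDerivAt f (deriv f x) x := fun x hx =>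
    ((hf.differentiableOn (by norm_num)).differentiableAt (hU.mem_nhds hx)).hasDerivAt
  have h1U : (1:ℝ) ∈ U := hUIcc (by simp)
  have hf' : ContDiffOn ℝ 2 (deriv f) U := hf.deriv_of_isOpen hU (by norm_num)
  have hq1 : HasDerivAt (deriv f) q 1 :=
    ((hf'.differentiableOn (by norm_num)).differentiableAt (hU.mem_nhds h1U)).hasDerivAt
  have hsub : ∀ x : ℝ, HasDerivAt (fun x : ℝ => 1 - x) (-1) x := fun x => by
    simpa using (hasDerivAt_id x).const_sub 1
  have hxU : ∀ x ∈ Set.Ico (0:ℝ) 1, 1 - x ∈ U := fun x hx =>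
    hUIcc ⟨by linarith [hx.2], by linarith [hx.1]⟩
  have hφd : ∀ x ∈ Set.Ico (0:ℝ) 1, HasDerivAt (fun x => f (1 - x)) (-deriv f (1 - x)) x := by
    intro x hx
    have := (hfd _ (hxU x hx)).comp x (hsub x)
    simpa [Function.comp_def] using this
  have hΦd : ∀ x ∈ Set.Ico (0:ℝ) 1, HasDerivAt (fun x => F (1 - x)) (f (1 - x)) x := by
    intro x hx
    have hFd : HasDerivAt F (-f (1 - x)) (1 - x) := by
      have e : F = fun r => ∫ ρ in r..1, f ρ := funext hF
      rw [e]
      apply intervalIntegral.integral_hasDerivAt_left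
      · apply ContinuousOn.intervalIntegrable
        apply hf.continuousOn.mono
        rw [Set.uIcc_of_le (by linarith [hx.1])]
        exact fun z hz => hUIcc ⟨by linarith [hx.2, hz.1], hz.2⟩
      · exact hf.continuousOn.stronglyMeasurableAtFilter hU _ (hxU x hx)
      · exact (hfd _ (hxU x hx)).continuousAt
    have := hFd.comp x (hsub x)
    simpa [Function.comp_def] using this
  have hid : Tendsto (fun x : ℝ => x) (𝓝[>] 0) (𝓝 0) := tendsto_id.mono_left nhdsWithin_le_nhds
  have hIoo : Set.Ioo (0:ℝ) 1 ∈ 𝓝[>] (0:ℝ) := Ioo_mem_nhdsGT one_pos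
  have hF0 : F 1 = 0 := by rw [hF]; simp
  set r : ℝ → ℝ := fun x => f (1 - x) + p * x - q / 2 * x ^ 2 with hr
  set R : ℝ → ℝ := fun x => F (1 - x) + p / 2 * x ^ 2 - q / 6 * x ^ 3 with hR
  have hrd : ∀ x ∈ Set.Ico (0:ℝ) 1, HasDerivAt r (-deriv f (1 - x) + p - q * x) x := by
    intro x hx
    have := ((hφd x hx).add ((hasDerivAt_id x).const_mul p)).sub
      (((hasDerivAt_id x).pow 2).const_mul (q / 2))
    refine this.congr_deriv ?_
    simp
    ring
  have hRd : ∀ x ∈ Set.Ico (0:ℝ) 1, HasDerivAt R (r x) x := by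
    intro x hx
    have := ((hΦd x hx).add (((hasDerivAt_id x).pow 2).const_mul (p / 2))).sub
      (((hasDerivAt_id x).pow 3).const_mul (q / 6))
    refine this.congr_deriv ?_
    simp [hr]
    ring
  have hr0 : Tendsto r (𝓝[>] 0) (𝓝 0) := by
    have := (hrd 0 (by simp)).continuousAt.tendsto.mono_left (nhdsWithin_le_nhds (s := Set.Ioi 0))
    simpa [hr, hf1] using this
  have hR0 : Tendsto R (𝓝[>] 0) (𝓝 0) := by
    have := (hRd 0 (by simp)).continuousAt.tendsto.mono_left (nhdsWithin_le_nhds (s := Set.Ioi 0))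
    simpa [hR, hF0] using this
  have hpow : ∀ n : ℕ, n ≠ 0 → Tendsto (fun x : ℝ => x ^ n) (𝓝[>] 0) (𝓝 0) := fun n hn => by
    simpa [hn] using hid.pow n
  have s1 : Tendsto (fun x => (-deriv f (1 - x) + p - q * x) / (2 * x)) (𝓝[>] 0) (𝓝 0) := by
    have hg : HasDerivAt (fun x => deriv f (1 - x)) (-q) 0 := by
      have hq2 : HasDerivAt (deriv f) q (1 - 0) := by simpa using hq1
      have := hq2.comp (0:ℝ) (hsub 0)
      simpa [Function.comp_def] using this
    have h2 := (hasDerivAt_iff_tendsto_slope_zero.1 hg).mono_left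
      (nhdsWithin_mono 0 (fun x (hx : x ∈ Set.Ioi (0:ℝ)) => (ne_of_gt hx : x ∈ ({0}ᶜ : Set ℝ))))
    have h3 : Tendsto (fun x => -(1/2) * (x⁻¹ • (deriv f (1 - (0 + x)) - deriv f (1 - 0)) + q))
      (𝓝[>] 0) (𝓝 0) := by
      simpa using (h2.add_const q).const_mul (-(1/2) : ℝ)
    refine h3.congr' ?_
    filter_upwards [self_mem_nhdsWithin] with x hx
    have hx : x ≠ 0 := ne_of_gt hx
    simp only [smul_eq_mul, zero_add, sub_zero, ← hp]
    field_simp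
    ring
  have s2 : Tendsto (fun x => r x / x ^ 2) (𝓝[>] 0) (𝓝 0) := by
    refine HasDerivAt.lhopital_zero_nhdsGT (f' := fun x => -deriv f (1 - x) + p - q * x)
      (g' := fun x => 2 * x) ?_ ?_ ?_ hr0 (hpow 2 (by norm_num)) s1
    · filter_upwards [hIoo] with x hx using hrd x ⟨hx.1.le, hx.2⟩
    · exact Eventually.of_forall fun x => by simpa using hasDerivAt_pow 2 x
    · filter_upwards [hIoo] with x hx
      have := hx.1
      positivity
  have s3 : Tendsto (fun x => R x / x ^ 3) (𝓝[>] 0) (𝓝 0) := by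
    refine HasDerivAt.lhopital_zero_nhdsGT (f' := r)
      (g' := fun x => 3 * x ^ 2) ?_ ?_ ?_ hR0 (hpow 3 (by norm_num)) ?_
    · filter_upwards [hIoo] with x hx using hRd x ⟨hx.1.le, hx.2⟩
    · exact Eventually.of_forall fun x => by simpa using hasDerivAt_pow 3 x
    · filter_upwards [hIoo] with x hx
      have := hx.1
      positivity
    · have : Tendsto (fun x => (1/3) * (r x / x ^ 2)) (𝓝[>] 0) (𝓝 0) := by
        simpa using s2.const_mul (1/3 : ℝ)
      refine this.congr fun x => ?_
      rw [mul_comm 3, ← div_div]; ring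
  refine ⟨fun x => ((-4 * F (1 - x) + 4 * (1 - x) * f (1 - x)) * x ^ 2
      - 4 * (1 - x) * F (1 - x) * (2 * x)) / (x ^ 2) ^ 2, ?_, ?_, ?_⟩
  · intro x hx
    have hx2 : x ^ 2 ≠ 0 := pow_ne_zero _ hx.1.ne'
    have := ((((hsub x).const_mul 4).mul (hΦd x ⟨hx.1.le, hx.2⟩)).div (hasDerivAt_pow 2 x) hx2).add_const
      (2 * p)
    refine this.congr_deriv ?_
    simp
  · have t : Tendsto (fun x => -4 * (-p / 2 + q / 6 * x) + 4 * (1 - x) * (q / 6)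
        - 4 * (R x / x ^ 3 * x) + 4 * (1 - x) * (r x / x ^ 2 - 2 * (R x / x ^ 3))) (𝓝[>] 0)
        (𝓝 (-4 * (-p / 2 + q / 6 * 0) + 4 * (1 - 0) * (q / 6)
        - 4 * (0 * 0) + 4 * (1 - 0) * (0 - 2 * 0))) := by
      have u1 : Tendsto (fun x : ℝ => 4 * (1 - x)) (𝓝[>] 0) (𝓝 (4 * (1 - 0))) :=
        (tendsto_const_nhds.sub hid).const_mul 4
      exact ((((tendsto_const_nhds.add (hid.const_mul _)).const_mul _).add (u1.mul_const _)).sub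
        ((s3.mul hid).const_mul 4)).add (u1.mul (s2.sub (s3.const_mul 2)))
    have e : (2 * q + 6 * p) / 3 = -4 * (-p / 2 + q / 6 * 0) + 4 * (1 - 0) * (q / 6)
        - 4 * (0 * 0) + 4 * (1 - 0) * (0 - 2 * 0) := by ring
    rw [e]
    refine t.congr' ?_
    filter_upwards [self_mem_nhdsWithin] with x hx
    have hx : x ≠ 0 := ne_of_gt hx
    simp only [hr, hR]
    field_simp
    ring
  · have t : Tendsto (fun x => 4 * (1 - x) * (-p / 2 + q / 6 * x + R x / x ^ 3 * x) + 2 * p) (𝓝[>] 0)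
        (𝓝 (4 * (1 - 0) * (-p / 2 + q / 6 * 0 + 0 * 0) + 2 * p)) := by
      have u1 : Tendsto (fun x : ℝ => 4 * (1 - x)) (𝓝[>] 0) (𝓝 (4 * (1 - 0))) :=
        (tendsto_const_nhds.sub hid).const_mul 4
      exact (u1.mul ((tendsto_const_nhds.add (hid.const_mul _)).add (s3.mul hid))).add_const _
    have e : (0:ℝ) = 4 * (1 - 0) * (-p / 2 + q / 6 * 0 + 0 * 0) + 2 * p := by ring
    rw [e]
    rw [← e]
    rw [← e] at t
    refine t.congr' ?_
    filter_upwards [self_mem_nhdsWithin] with x hx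
    have hx : x ≠ 0 := ne_of_gt hx
    simp only [hR]
    field_simp
    ring

set_option maxHeartbeats 1000000 in
/-- Limit of the rescaled integral: `∫₀^{ξ(c)} x/(ν_c √(-N_c(x))) dx → -6/k`
as `c → c_s⁻`. -/
theorem stmt_13 (f : ℝ → ℝ) (U : Set ℝ) (hU : IsOpen U) (hUIcc : Set.Icc (0:ℝ) 1 ⊆ U)
    (hf : ContDiffOn ℝ 3 f U) (hf1 : f 1 = 0) (hf'1 : deriv f 1 < 0)
    (cs k : ℝ) (hcs : cs = Real.sqrt (-(2 * deriv f 1)))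
    (hk : k = 2 * deriv (deriv f) 1 + 6 * deriv f 1) (hk0 : k ≠ 0)
    (F : ℝ → ℝ) (hF : ∀ r, F r = ∫ ρ in r..1, f ρ)
    (c₀ : ℝ) (hc₀ : 0 < c₀) (hc₀cs : c₀ < cs)
    (ξ : ℝ → ℝ)
    (hξmem : ∀ c ∈ Set.Ioo c₀ cs, ξ c ∈ Set.Ioo (0:ℝ) 1)
    (hzero : ∀ c ∈ Set.Ioo c₀ cs,
      c ^ 2 * (ξ c) ^ 2 - 4 * (1 - ξ c) * F (1 - ξ c) = 0)
    (hneg : ∀ c ∈ Set.Ioo c₀ cs, ∀ x ∈ Set.Ioo 0 (ξ c),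
      c ^ 2 * x ^ 2 - 4 * (1 - x) * F (1 - x) < 0)
    (hdN : ∀ c ∈ Set.Ioo c₀ cs,
      0 < deriv (fun x => c ^ 2 * x ^ 2 - 4 * (1 - x) * F (1 - x)) (ξ c))
    (hξ0 : Tendsto ξ (𝓝[<] cs) (𝓝 0)) :
    Tendsto (fun c => ∫ x in (0:ℝ)..(ξ c),
        x / (Real.sqrt (cs ^ 2 - c ^ 2) *
          Real.sqrt (-(c ^ 2 * x ^ 2 - 4 * (1 - x) * F (1 - x)))))
      (𝓝[<] cs) (𝓝 (-6 / k)) := by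
  obtain ⟨h', hd, hh', hh⟩ := aux_C f U hU hUIcc hf hf1 F hF
  rw [← hk] at hh'
  have hcs2 : cs ^ 2 = -(2 * deriv f 1) := by
    rw [hcs]; exact Real.sq_sqrt (by linarith)
  set h : ℝ → ℝ := fun x => 4 * (1 - x) * F (1 - x) / x ^ 2 + 2 * deriv f 1 with hh_def
  have hN : ∀ c x : ℝ, x ≠ 0 → -(c ^ 2 * x ^ 2 - 4 * (1 - x) * F (1 - x))
      = x ^ 2 * (cs ^ 2 - c ^ 2 + h x) := by
    intro c x hx
    rw [hcs2]
    simp only [hh_def]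
    field_simp
    ring
  have hIoo : Set.Ioo c₀ cs ∈ 𝓝[<] cs := Ioo_mem_nhdsLT hc₀cs
  have hν : ∀ c ∈ Set.Ioo c₀ cs, 0 < cs ^ 2 - c ^ 2 := by
    intro c hc
    nlinarith [hc.1, hc.2]
  have hξh : ∀ c ∈ Set.Ioo c₀ cs, h (ξ c) = -(cs ^ 2 - c ^ 2) := by
    intro c hc
    have hx := (hξmem c hc).1
    have h1 := hN c (ξ c) hx.ne'
    rw [hzero c hc, neg_zero] at h1
    have h2 : (ξ c) ^ 2 ≠ 0 := pow_ne_zero _ hx.ne'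
    have := (mul_eq_zero.1 h1.symm).resolve_left h2
    linarith
  have hkneg : k < 0 := by
    by_contra hcon
    have hkpos : 0 < k := lt_of_le_of_ne (not_lt.1 hcon) (Ne.symm hk0)
    obtain ⟨δ, hδ, hδ1, hall⟩ := aux_A h h' (k / 3) hd hh' hh (k / 6) (by linarith)
    have hev : ∀ᶠ c in 𝓝[<] cs, ξ c < δ := hξ0.eventually_lt_const hδ
    obtain ⟨c, hc1, hc2⟩ := (hev.and hIoo).exists
    have hx := (hξmem c hc2).1
    have h1 := (hall (ξ c) ⟨hx, hc1⟩).2.1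
    rw [hξh c hc2] at h1
    nlinarith [hν c hc2, mul_pos hkpos hx]
  set a : ℝ := -k / 3 with ha
  have ha0 : 0 < a := by rw [ha]; linarith
  have hlim : -6 / k = 2 / a := by
    rw [ha]; field_simp; norm_num
  rw [hlim]
  have main : ∀ ε, 0 < ε → ε < a → ∀ᶠ c in 𝓝[<] cs,
      2 / (a + ε) ≤ (∫ x in (0:ℝ)..(ξ c),
        x / (Real.sqrt (cs ^ 2 - c ^ 2) *
          Real.sqrt (-(c ^ 2 * x ^ 2 - 4 * (1 - x) * F (1 - x))))) ∧
      (∫ x in (0:ℝ)..(ξ c),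
        x / (Real.sqrt (cs ^ 2 - c ^ 2) *
          Real.sqrt (-(c ^ 2 * x ^ 2 - 4 * (1 - x) * F (1 - x))))) ≤ 2 / (a - ε) := by
    intro ε hε hεa
    obtain ⟨δ, hδ, hδ1, hall⟩ := aux_A h h' (k / 3) hd hh' hh ε hε
    filter_upwards [hIoo, hξ0.eventually_lt_const hδ] with c hc hcδ
    have hx0 := (hξmem c hc).1
    have hx1 := (hξmem c hc).2
    obtain ⟨h1, h2, h3⟩ := hall (ξ c) ⟨hx0, hcδ⟩
    have hνc := hν c hc
    have hhc := hξh c hc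
    set y := ξ c with hy
    set w := cs ^ 2 - c ^ 2 with hw
    have hAm : 0 < a - ε := by linarith
    have hAp : 0 < a + ε := by linarith
    have hk3 : k / 3 = -a := by rw [ha]; ring
    rw [hk3] at h1 h2 h3
    have hw1 : (a - ε) * y ≤ w := by nlinarith
    have hw2 : w ≤ (a + ε) * y := by nlinarith
    -- the integrand
    have hI : ∀ x ∈ Set.Ioo 0 y, x / (√w * √(-(c ^ 2 * x ^ 2 - 4 * (1 - x) * F (1 - x))))
        = 1 / (√w * √(w + h x)) := by
      intro x hx
      rw [hN c x hx.1.ne', ← hw, Real.sqrt_mul (sq_nonneg x), Real.sqrt_sq hx.1.le]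
      have := hx.1.ne'
      rw [show √w * (x * √(w + h x)) = x * (√w * √(w + h x)) by ring, ← div_div, div_self this]
    have hb : ∀ x ∈ Set.Ioo 0 y, (a - ε) * (y - x) ≤ w + h x ∧ w + h x ≤ (a + ε) * (y - x) := by
      intro x hx
      obtain ⟨g1, g2⟩ := h1 x hx
      constructor <;> nlinarith
    have hrp : ∀ x ∈ Set.Ioo 0 y, (y - x) ^ (-(1/2) : ℝ) = 1 / √(y - x) := by
      intro x hx
      rw [Real.rpow_neg (by linarith [hx.2]), Real.sqrt_eq_rpow, ← one_div]
    have hpos : ∀ x ∈ Set.Ioo 0 y, 0 < w + h x := fun x hx =>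
      lt_of_lt_of_le (mul_pos hAm (by linarith [hx.2])) (hb x hx).1
    have hsw : 0 < √w := Real.sqrt_pos.2 hνc
    have B := aux_B (fun x => x / (√w * √(-(c ^ 2 * x ^ 2 - 4 * (1 - x) * F (1 - x))))) y
      (1 / (√w * √(a + ε))) (1 / (√w * √(a - ε))) hx0 ?_ (by positivity) ?_ ?_
    · refine ⟨le_trans ?_ B.1, le_trans B.2 ?_⟩
      · have e : √w ≤ √(a + ε) * √y := by
          rw [← Real.sqrt_mul hAp.le]; exact Real.sqrt_le_sqrt hw2
        have hs : 0 < √(a + ε) := Real.sqrt_pos.2 hAp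
        have hss : √(a + ε) * √(a + ε) = a + ε := Real.mul_self_sqrt hAp.le
        rw [mul_one_div, div_mul_eq_mul_div, div_le_div_iff₀ hAp (by positivity)]
        have := mul_le_mul_of_nonneg_right e hs.le
        nlinarith
      · have e : √(a - ε) * √y ≤ √w := by
          rw [← Real.sqrt_mul hAm.le]; exact Real.sqrt_le_sqrt hw1
        have hs : 0 < √(a - ε) := Real.sqrt_pos.2 hAm
        have hss : √(a - ε) * √(a - ε) = a - ε := Real.mul_self_sqrt hAm.le
        rw [mul_one_div, div_mul_eq_mul_div, div_le_div_iff₀ (by positivity) hAm]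
        have := mul_le_mul_of_nonneg_right e hs.le
        nlinarith
    · have hcont : ContinuousOn (fun x => 1 / (√w * √(w + h x))) (Set.Ioo 0 y) := by
        have hch : ContinuousOn h (Set.Ioo 0 y) := fun x hx =>
          (hd x ⟨hx.1, by linarith [hx.2]⟩).continuousAt.continuousWithinAt
        refine continuousOn_const.div (continuousOn_const.mul (continuousOn_const.add hch).sqrt) ?_
        intro x hx
        have := Real.sqrt_pos.2 (hpos x hx)
        positivity
      exact hcont.congr hI
    · intro x hx
      have hyx : 0 < y - x := by linarith [hx.2]
      have := Real.sqrt_pos.2 (hpos x hx)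
      simp only [hI x hx]
      rw [hrp x hx, one_div_mul_one_div, mul_assoc, ← Real.sqrt_mul hAp.le]
      exact one_div_le_one_div_of_le (by positivity)
        (mul_le_mul_of_nonneg_left (Real.sqrt_le_sqrt (hb x hx).2) hsw.le)
    · intro x hx
      have hyx : 0 < y - x := by linarith [hx.2]
      simp only [hI x hx]
      rw [hrp x hx, one_div_mul_one_div, mul_assoc, ← Real.sqrt_mul hAm.le]
      exact one_div_le_one_div_of_le (by positivity)
        (mul_le_mul_of_nonneg_left (Real.sqrt_le_sqrt (hb x hx).1) hsw.le)
  have hid : Tendsto (fun ε : ℝ => ε) (𝓝[>] 0) (𝓝 0) := tendsto_id.mono_left nhdsWithin_le_nhds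
  have hIa : Set.Ioo 0 a ∈ 𝓝[>] (0:ℝ) := Ioo_mem_nhdsGT ha0
  rw [tendsto_order]
  constructor
  · intro l hl
    have t : Tendsto (fun ε : ℝ => 2 / (a + ε)) (𝓝[>] 0) (𝓝 (2 / a)) := by
      have := (tendsto_const_nhds (x := (2:ℝ))).div ((tendsto_const_nhds (x := a)).add hid)
        (by simpa using ha0.ne')
      simpa [Pi.div_def] using this
    obtain ⟨ε, h1, h2⟩ := ((t.eventually_const_lt hl).and hIa).exists
    filter_upwards [main ε h2.1 h2.2] with c hc
    exact lt_of_lt_of_le h1 hc.1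
  · intro l hl
    have t : Tendsto (fun ε : ℝ => 2 / (a - ε)) (𝓝[>] 0) (𝓝 (2 / a)) := by
      have := (tendsto_const_nhds (x := (2:ℝ))).div ((tendsto_const_nhds (x := a)).sub hid)
        (by simpa using ha0.ne')
      simpa [Pi.div_def] using this
    obtain ⟨ε, h1, h2⟩ := ((t.eventually_lt_const hl).and hIa).exists
    filter_upwards [main ε h2.1 h2.2] with c hc
    exact lt_of_le_of_lt hc.2 h1
end
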